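/- arXiv:1703.04510 — 12 statements merged into one kernel-verified Lean document; each statement's English description precedes it below -/
import Mathlib

section
/- Let X be a Banach space, K ⊂ X a cone, U a relatively open subset of K, and T : cl(U) → K a (not necessarily continuous) map which sends bounded subsets of cl(U) into relatively compact subsets of X. Then the closed–convex envelope 𝕋 of T assumes compact values, i.e. 𝕋x is a compact subset of X for every x ∈ cl(U). -/
open Set Metric Filter Topology

/-- The closed–convex envelope of an operator `T` over the set `U`:
`𝕋 x = ⋂_{ε>0} closedConvexHull (T (closedBall x ε ∩ U))`. -/
noncomputable def ccEnvelope {X : Type*} [NormedAddCommGroup X] [NormedSpace ℝ X]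
    (U : Set X) (T : X → X) (x : X) : Set X :=
  ⋂ ε > (0:ℝ), closure (convexHull ℝ (T '' (closedBall x ε ∩ U)))

/-- If `T : cl(U) → K` maps bounded sets into relatively compact sets, then its
closed–convex envelope assumes compact values. -/
theorem ccEnvelope_isCompact
    {X : Type*} [NormedAddCommGroup X] [NormedSpace ℝ X] [CompleteSpace X]
    (K : Set X) (hKcl : IsClosed K) (hKconv : Convex ℝ K)
    (hKcone : ∀ x ∈ K, ∀ l : ℝ, 0 ≤ l → l • x ∈ K)
    (hKpointed : ∀ x ∈ K, -x ∈ K → x = 0)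
    (U : Set X) (hU : ∃ V : Set X, IsOpen V ∧ U = V ∩ K)
    (T : X → X) (hTmaps : ∀ x ∈ closure U, T x ∈ K)
    (hTcompact : ∀ B ⊆ closure U, Bornology.IsBounded B → IsCompact (closure (T '' B)))
    (x : X) (hx : x ∈ closure U) :
    IsCompact (ccEnvelope (closure U) T x) := by
  have h1 : IsCompact (closure (T '' (closedBall x 1 ∩ closure U))) :=
    hTcompact _ inter_subset_right (isBounded_closedBall.subset inter_subset_left)
  have h2 : TotallyBounded (T '' (closedBall x 1 ∩ closure U)) :=
    h1.totallyBounded.subset subset_closure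
  have h3 : TotallyBounded (convexHull ℝ (T '' (closedBall x 1 ∩ closure U))) :=
    totallyBounded_convexHull.2 h2
  have h4 : IsCompact (closure (convexHull ℝ (T '' (closedBall x 1 ∩ closure U)))) :=
    h3.closure.isCompact_of_isClosed isClosed_closure
  unfold ccEnvelope
  exact h4.of_isClosed_subset
    (isClosed_iInter fun _ => isClosed_iInter fun _ => isClosed_closure)
    (iInter₂_subset (1 : ℝ) one_pos)
end

section
/- Let X be a Banach space, K ⊂ X a cone, U a relatively open subset of K, and T : cl(U) → K a map which sends bounded subsets of cl(U) into relatively compact subsets of X. Then the closed–convex envelope 𝕋 of T is upper semicontinuous as a multivalued map: whenever x_n → x in cl(U), y_n ∈ 𝕋x_n for all n, and y_n → y, it follows that y ∈ 𝕋x. -/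
open Set Metric Filter Topology

/-- If `T : cl(U) → K` maps bounded sets into relatively compact sets, then its
closed–convex envelope is upper semicontinuous: if `xₙ → x` in `cl(U)`, `yₙ ∈ 𝕋 xₙ`
and `yₙ → y`, then `y ∈ 𝕋 x`. -/
theorem ccEnvelope_usc
    {X : Type*} [NormedAddCommGroup X] [NormedSpace ℝ X] [CompleteSpace X]
    (K : Set X) (hKcl : IsClosed K) (hKconv : Convex ℝ K)
    (hKcone : ∀ x ∈ K, ∀ l : ℝ, 0 ≤ l → l • x ∈ K)
    (hKpointed : ∀ x ∈ K, -x ∈ K → x = 0)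
    (U : Set X) (hU : ∃ V : Set X, IsOpen V ∧ U = V ∩ K)
    (T : X → X) (hTmaps : ∀ x ∈ closure U, T x ∈ K)
    (hTcompact : ∀ B ⊆ closure U, Bornology.IsBounded B → IsCompact (closure (T '' B)))
    (x : X) (hx : x ∈ closure U)
    (xn : ℕ → X) (hxn : ∀ n, xn n ∈ closure U) (hxn_lim : Tendsto xn atTop (𝓝 x))
    (yn : ℕ → X) (hyn : ∀ n, yn n ∈ ccEnvelope (closure U) T (xn n))
    (y : X) (hyn_lim : Tendsto yn atTop (𝓝 y)) :
    y ∈ ccEnvelope (closure U) T x := by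
  unfold ccEnvelope at hyn ⊢
  simp only [mem_iInter] at hyn ⊢
  intro ε hε
  refine isClosed_closure.mem_of_tendsto hyn_lim ?_
  have hball : ∀ᶠ n in atTop, xn n ∈ ball x (ε / 2) :=
    hxn_lim.eventually (ball_mem_nhds x (half_pos hε))
  filter_upwards [hball] with n hn
  refine closure_mono (convexHull_mono (image_mono (inter_subset_inter_left _ ?_)))
    (hyn n (ε / 2) (half_pos hε))
  apply closedBall_subset_closedBall'
  have := mem_ball.1 hn
  linarith
end

section
/- (Krasnoselskii fixed point theorem for discontinuous operators, first version.) Let K be a cone in a Banach space X, let r₁, r₂ ≤ R be positive numbers with r₁ ≠ r₂, and let T : closedBall(0,R) ∩ K → K be a map such that T(closedBall(0,R) ∩ K) is relatively compact and {x} ∩ 𝕋x ⊆ {Tx} for all x ∈ closedBall(0,R) ∩ K, where 𝕋 is the closed–convex envelope of T. Suppose that (a) λx ∉ 𝕋x for all x ∈ K with ‖x‖ = r₁ and all λ ≥ 1, and (b) there exists w ∈ K with ‖w‖ ≠ 0 such that x ∉ 𝕋x + λw for all λ ≥ 0 and all x ∈ K with ‖x‖ = r₂. Then T has at least one fixed point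 x ∈ K with min{r₁,r₂} < ‖x‖ < max{r₁,r₂}. -/
open Set Metric Filter Topology

section Scarf

set_option linter.unusedSectionVars false

variable {V I α : Type*} [Fintype V] [DecidableEq V] [Fintype I] [DecidableEq I] [LinearOrder α]

/-- Scarf dominance of a finite set of points for a family of injective utilities. -/
def ScarfDom (u : I → V → α) (σ : Finset V) : Prop := ∀ t, ∃ i, ∀ x ∈ σ, u i t ≤ u i x

lemma scarf_anti {u : I → V → α} {σ τ : Finset V} (h : σ ⊆ τ) (hτ : ScarfDom u τ) :
    ScarfDom u σ := fun t => by
  obtain ⟨i, hi⟩ := hτ t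
  exact ⟨i, fun x hx => hi x (h hx)⟩

open Classical in
lemma scarf_room_even (c : V → I) (u : I → V → α) (i₀ : I) (r : Finset V)
    (hr : ScarfDom u r) (hcard : r.card = Fintype.card I)
    (hnf : r.image c ≠ Finset.univ) :
    Even (Finset.card (Finset.univ.filter (fun d : Finset V =>
      (ScarfDom u d ∧ d.image c = Finset.univ.erase i₀ ∧ d.card + 1 = Fintype.card I) ∧ d ⊆ r))) := by
  by_cases hne : (Finset.univ.filter (fun d : Finset V =>
      (ScarfDom u d ∧ d.image c = Finset.univ.erase i₀ ∧ d.card + 1 = Fintype.card I) ∧ d ⊆ r)) = ∅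
  · rw [hne]; simp
  obtain ⟨d₀, hd₀⟩ := Finset.nonempty_iff_ne_empty.mpr hne
  simp only [Finset.mem_filter, Finset.mem_univ, true_and] at hd₀
  obtain ⟨⟨-, him, -⟩, hsub⟩ := hd₀
  have himr : r.image c = Finset.univ.erase i₀ := by
    have h1 : Finset.univ.erase i₀ ⊆ r.image c := by
      rw [← him]; exact Finset.image_subset_image hsub
    refine Finset.Subset.antisymm ?_ h1
    intro j hj
    refine Finset.mem_erase.mpr ⟨?_, Finset.mem_univ _⟩
    rintro rfl
    apply hnf
    ext k
    simp only [Finset.mem_univ, iff_true]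
    by_cases hk : k = j
    · exact hk ▸ hj
    · exact h1 (by simp [hk])
  have hlt : (r.image c).card < r.card := by
    rw [himr, Finset.card_erase_of_mem (Finset.mem_univ _), hcard, Finset.card_univ]
    have : 0 < Fintype.card I := Fintype.card_pos_iff.mpr ⟨i₀⟩
    omega
  obtain ⟨x, hx, y, hy, hxy, hc⟩ := Finset.exists_ne_map_eq_of_card_lt_of_maps_to hlt
    (fun a ha => Finset.mem_image_of_mem c ha)
  have key : (Finset.univ.filter (fun d : Finset V =>
      (ScarfDom u d ∧ d.image c = Finset.univ.erase i₀ ∧ d.card + 1 = Fintype.card I) ∧ d ⊆ r))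
      = {r.erase x, r.erase y} := by
    have aux : ∀ x ∈ r, ∀ y ∈ r, x ≠ y → c x = c y → (r.erase x).image c = r.image c := by
      intro x hx y hy hxy hc
      refine Finset.Subset.antisymm (Finset.image_subset_image (Finset.erase_subset _ _)) ?_
      intro k hk
      obtain ⟨z, hz, rfl⟩ := Finset.mem_image.mp hk
      by_cases hzx : z = x
      · subst hzx
        exact Finset.mem_image.mpr ⟨y, Finset.mem_erase.mpr ⟨hxy.symm, hy⟩, hc.symm⟩
      · exact Finset.mem_image_of_mem c (Finset.mem_erase.mpr ⟨hzx, hz⟩)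
    ext d
    simp only [Finset.mem_filter, Finset.mem_univ, true_and, Finset.mem_insert,
      Finset.mem_singleton]
    constructor
    · rintro ⟨⟨-, hi, hcd⟩, hs⟩
      have hinj : Set.InjOn c d := by
        apply Finset.injOn_of_card_image_eq
        rw [hi, Finset.card_erase_of_mem (Finset.mem_univ _), Finset.card_univ]; omega
      by_cases hxd : x ∈ d
      · by_cases hyd : y ∈ d
        · exact absurd (hinj hxd hyd hc) hxy
        · right
          apply Finset.eq_of_subset_of_card_le
          · intro z hz; exact Finset.mem_erase.mpr ⟨fun h => hyd (h ▸ hz), hs hz⟩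
          · rw [Finset.card_erase_of_mem hy]; omega
      · left
        apply Finset.eq_of_subset_of_card_le
        · intro z hz; exact Finset.mem_erase.mpr ⟨fun h => hxd (h ▸ hz), hs hz⟩
        · rw [Finset.card_erase_of_mem hx]; omega
    · have hpos : 0 < r.card := Finset.card_pos.mpr ⟨x, hx⟩
      rintro (rfl | rfl)
      · refine ⟨⟨scarf_anti (Finset.erase_subset _ _) hr, ?_, ?_⟩, Finset.erase_subset _ _⟩
        · rw [aux x hx y hy hxy hc, himr]
        · rw [Finset.card_erase_of_mem hx]; omega
      · refine ⟨⟨scarf_anti (Finset.erase_subset _ _) hr, ?_, ?_⟩, Finset.erase_subset _ _⟩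
        · rw [aux y hy x hx hxy.symm hc.symm, himr]
        · rw [Finset.card_erase_of_mem hy]; omega
  rw [key, Finset.card_pair]
  · exact even_two
  · intro h
    have : y ∈ r.erase x := Finset.mem_erase.mpr ⟨hxy.symm, hy⟩
    rw [h] at this
    simp at this

/-- One side of a door: there is a maximal admissible point. -/
lemma scarf_side (u : I → V → α) (hu : ∀ i, Function.Injective (u i)) (d : Finset V)
    (hd : ScarfDom u d) (m : I → V) (hmd : ∀ i, m i ∈ d)
    (hmin : ∀ i, ∀ x ∈ d, u i (m i) ≤ u i x) (k : I)
    (hsurj : ∀ x ∈ d, ∃ l, l ≠ k ∧ m l = x)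
    (hM : ∃ t, ∀ l, l ≠ k → u l (m l) < u l t) :
    ∃ y, y ∉ d ∧ (∀ l, l ≠ k → u l (m l) < u l y) ∧ ScarfDom u (insert y d) ∧
      ∀ y', (∀ l, l ≠ k → u l (m l) < u l y') → ScarfDom u (insert y' d) → y' = y := by
  classical
  let M : Finset V := Finset.univ.filter (fun t => ∀ l, l ≠ k → u l (m l) < u l t)
  have memM : ∀ t, t ∈ M ↔ ∀ l, l ≠ k → u l (m l) < u l t := by intro t; simp [M]
  have hMne : M.Nonempty := by
    obtain ⟨t, ht⟩ := hM
    exact ⟨t, (memM t).2 ht⟩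
  obtain ⟨y, hyM, hymax⟩ := Finset.exists_max_image M (u k) hMne
  have hyl := (memM y).1 hyM
  have hky : ∀ x ∈ d, u k y ≤ u k x := by
    obtain ⟨l, hl⟩ := hd y
    by_cases hlk : l = k
    · exact hlk ▸ hl
    · exact absurd (hl _ (hmd l)) (not_le.mpr (hyl l hlk))
  have hyd : y ∉ d := by
    intro h
    obtain ⟨l, hlk, hl⟩ := hsurj y h
    have := hyl l hlk
    rw [hl] at this
    exact lt_irrefl _ this
  refine ⟨y, hyd, hyl, ?_, ?_⟩
  · intro t
    by_cases ht : t ∈ M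
    · refine ⟨k, fun x hx => ?_⟩
      have hty := hymax t ht
      rcases Finset.mem_insert.mp hx with rfl | hx
      · exact hty
      · exact hty.trans (hky x hx)
    · rw [memM] at ht
      push Not at ht
      obtain ⟨l, hlk, hl⟩ := ht
      refine ⟨l, fun x hx => ?_⟩
      rcases Finset.mem_insert.mp hx with rfl | hx
      · exact hl.trans (hyl l hlk).le
      · exact hl.trans (hmin l x hx)
  · intro y' hy' hdom
    apply hu k
    apply le_antisymm (hymax y' ((memM y').2 hy'))
    obtain ⟨l, hl⟩ := hdom y
    by_cases hlk : l = k
    · subst hlk; exact hl y' (Finset.mem_insert_self _ _)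
    · exact absurd (hl _ (Finset.mem_insert_of_mem (hmd l))) (not_le.mpr (hyl l hlk))

open Classical in
lemma scarf_door_even (c : V → I) (u : I → V → α) (hu : ∀ i, Function.Injective (u i))
    (s : I → V) (hs : ∀ i v, u i (s i) ≤ u i v) (hcs : ∀ i, c (s i) = i)
    (hbig : ∀ i j v, j ≠ i → v ∉ Set.range s → u i v < u i (s j)) (i₀ : I)
    (d : Finset V) (hd : ScarfDom u d) (him : d.image c = Finset.univ.erase i₀)
    (hcard : d.card + 1 = Fintype.card I)
    (hne : d ≠ (Finset.univ.erase i₀).image s) :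
    Even (Finset.card (Finset.univ.filter (fun r : Finset V =>
      (ScarfDom u r ∧ r.card = Fintype.card I) ∧ d ⊆ r))) := by
  have hsinj : Function.Injective s := fun a b h => by rw [← hcs a, ← hcs b, h]
  have hcI : (Finset.univ.erase i₀).card + 1 = Fintype.card I := by
    rw [Finset.card_erase_of_mem (Finset.mem_univ _), Finset.card_univ]
    have : 0 < Fintype.card I := Fintype.card_pos_iff.mpr ⟨i₀⟩
    omega
  have hdne : d.Nonempty := by
    by_contra h
    rw [Finset.not_nonempty_iff_eq_empty] at h
    apply hne
    rw [h, eq_comm, Finset.image_eq_empty, ← him, h, Finset.image_empty]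
  have hex : ∀ i, ∃ x ∈ d, ∀ y ∈ d, u i x ≤ u i y := fun i => Finset.exists_min_image d (u i) hdne
  choose m hmd hmin using hex
  have huniq : ∀ i x, x ∈ d → (∀ y ∈ d, u i x ≤ u i y) → m i = x := fun i x hx h =>
    hu i (le_antisymm (hmin i x hx) (h _ (hmd i)))
  have hsurj : ∀ x ∈ d, ∃ l, m l = x := by
    intro x hx
    obtain ⟨l, hl⟩ := hd x
    exact ⟨l, huniq l x hx hl⟩
  obtain ⟨i, -, j, -, hij, hmij⟩ := Finset.exists_ne_map_eq_of_card_lt_of_maps_to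
    (s := (Finset.univ : Finset I)) (t := d) (f := m) (by rw [Finset.card_univ]; omega)
    (fun a _ => hmd a)
  have hM : ∀ k, ∃ t, ∀ l, l ≠ k → u l (m l) < u l t := by
    intro k
    refine ⟨s k, fun l hlk => ?_⟩
    by_contra hcon
    rw [not_lt] at hcon
    have hall : ∀ x ∈ d, u l (s k) ≤ u l x := fun x hx => hcon.trans (hmin l x hx)
    have hsub : d ⊆ (Finset.univ.erase l).image s := by
      intro x hx
      have hxs : x ∈ Set.range s := by
        by_contra hx'
        exact absurd (hall x hx) (not_le.mpr (hbig l k x hlk.symm hx'))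
      obtain ⟨a, rfl⟩ := hxs
      refine Finset.mem_image_of_mem s (Finset.mem_erase.mpr ⟨?_, Finset.mem_univ _⟩)
      rintro rfl
      exact hlk (hsinj (hu a (le_antisymm (hs a _) (hall _ hx))))
    have hdeq : d = (Finset.univ.erase l).image s := by
      apply Finset.eq_of_subset_of_card_le hsub
      rw [Finset.card_image_of_injective _ hsinj, Finset.card_erase_of_mem (Finset.mem_univ _),
        Finset.card_univ]
      omega
    have : l = i₀ := by
      by_contra hl
      have h1 : l ∈ d.image c := by rw [him]; simp [hl]
      rw [hdeq] at h1
      simp [hcs] at h1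
    subst this
    exact hne hdeq
  have hsi : ∀ x ∈ d, ∃ l, l ≠ i ∧ m l = x := by
    intro x hx
    obtain ⟨l, hl⟩ := hsurj x hx
    by_cases h : l = i
    · exact ⟨j, hij.symm, by rw [← hmij, ← h, hl]⟩
    · exact ⟨l, h, hl⟩
  have hsj : ∀ x ∈ d, ∃ l, l ≠ j ∧ m l = x := by
    intro x hx
    obtain ⟨l, hl⟩ := hsurj x hx
    by_cases h : l = j
    · exact ⟨i, hij, by rw [hmij, ← h, hl]⟩
    · exact ⟨l, h, hl⟩
  obtain ⟨y, hyd, hyM, hydom, hyu⟩ := scarf_side u hu d hd m hmd hmin i hsi (hM i)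
  obtain ⟨z, hzd, hzM, hzdom, hzu⟩ := scarf_side u hu d hd m hmd hmin j hsj (hM j)
  have hyz : y ≠ z := by
    rintro rfl
    obtain ⟨l, hl⟩ := hd y
    have := hl _ (hmd l)
    by_cases h : l = i
    · exact absurd this (not_le.mpr (hzM l (h ▸ hij)))
    · exact absurd this (not_le.mpr (hyM l h))
  have key : (Finset.univ.filter (fun r : Finset V =>
      (ScarfDom u r ∧ r.card = Fintype.card I) ∧ d ⊆ r)) = {insert y d, insert z d} := by
    ext r
    simp only [Finset.mem_filter, Finset.mem_univ, true_and, Finset.mem_insert,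
      Finset.mem_singleton]
    constructor
    · rintro ⟨⟨hrd, hrc⟩, hdr⟩
      obtain ⟨w, hwd, rfl⟩ : ∃ w, w ∉ d ∧ insert w d = r := by
        have h1 : (r \ d).card = 1 := by rw [Finset.card_sdiff_of_subset hdr]; omega
        obtain ⟨w, hw⟩ := Finset.card_eq_one.mp h1
        have hw' : w ∈ r \ d := by rw [hw]; simp
        refine ⟨w, (Finset.mem_sdiff.mp hw').2, ?_⟩
        rw [Finset.insert_eq, ← hw, Finset.sdiff_union_of_subset hdr]
      obtain ⟨k, hk⟩ := hrd w
      have hex2 : ∀ x : d, ∃ l, m l = x ∧ u l (m l) < u l w := by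
        rintro ⟨x, hx⟩
        obtain ⟨l, hl⟩ := hrd x
        have hm : m l = x := huniq l x hx (fun y hy => hl y (Finset.mem_insert_of_mem hy))
        refine ⟨l, hm, ?_⟩
        rw [hm]
        refine lt_of_le_of_ne (hl w (Finset.mem_insert_self _ _)) ?_
        intro h
        exact hwd (hu l h ▸ hx)
      choose L hL1 hL2 using hex2
      have hLinj : Function.Injective L := fun a b h => Subtype.ext (by rw [← hL1 a, ← hL1 b, h])
      have hkL : ∀ x, L x ≠ k := by
        intro x h
        have h1 := hL2 x
        rw [h] at h1
        exact absurd (hk _ (Finset.mem_insert_of_mem (hmd k))) (not_le.mpr h1)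
      have himg : Finset.univ.image L = Finset.univ.erase k := by
        apply Finset.eq_of_subset_of_card_le
        · intro l hl
          obtain ⟨x, -, rfl⟩ := Finset.mem_image.mp hl
          exact Finset.mem_erase.mpr ⟨hkL x, Finset.mem_univ _⟩
        · rw [Finset.card_image_of_injective _ hLinj, Finset.card_erase_of_mem (Finset.mem_univ _),
            Finset.card_univ, Finset.card_univ, Fintype.card_coe]
          omega
      have hLs : ∀ l, l ≠ k → ∃ x, L x = l := by
        intro l hl
        have : l ∈ Finset.univ.image L := by rw [himg]; simp [hl]
        obtain ⟨x, -, h⟩ := Finset.mem_image.mp this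
        exact ⟨x, h⟩
      have hwM : ∀ l, l ≠ k → u l (m l) < u l w := by
        intro l hl
        obtain ⟨x, rfl⟩ := hLs l hl
        exact hL2 x
      have hkij : k = i ∨ k = j := by
        by_contra hcon
        push Not at hcon
        obtain ⟨a, ha⟩ := hLs i hcon.1.symm
        obtain ⟨b, hb⟩ := hLs j hcon.2.symm
        apply hij
        have : a = b := Subtype.ext (by rw [← hL1 a, ← hL1 b, ha, hb, hmij])
        rw [← ha, ← hb, this]
      rcases hkij with rfl | rfl
      · left; rw [hyu w hwM hrd]
      · right; rw [hzu w hwM hrd]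
    · rintro (rfl | rfl)
      · exact ⟨⟨hydom, by rw [Finset.card_insert_of_notMem hyd]; omega⟩, Finset.subset_insert _ _⟩
      · exact ⟨⟨hzdom, by rw [Finset.card_insert_of_notMem hzd]; omega⟩, Finset.subset_insert _ _⟩
  rw [key, Finset.card_pair]
  · exact even_two
  · intro h
    have : y ∈ insert z d := h ▸ Finset.mem_insert_self y d
    rcases Finset.mem_insert.mp this with h | h
    · exact hyz h
    · exact hyd h

open Classical in
lemma scarf_boundary (u : I → V → α) (hu : ∀ i, Function.Injective (u i))
    (s : I → V) (hs : ∀ i v, u i (s i) ≤ u i v) (hsinj : Function.Injective s)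
    (hbig : ∀ i j v, j ≠ i → v ∉ Set.range s → u i v < u i (s j)) (i₀ : I)
    (hT : ∃ v, v ∉ Set.range s) :
    ScarfDom u ((Finset.univ.erase i₀).image s) ∧
    Finset.card (Finset.univ.filter (fun r : Finset V =>
      (ScarfDom u r ∧ r.card = Fintype.card I) ∧ (Finset.univ.erase i₀).image s ⊆ r)) = 1 := by
  set d := (Finset.univ.erase i₀).image s with hddef
  have hdcard : d.card + 1 = Fintype.card I := by
    rw [hddef, Finset.card_image_of_injective _ hsinj,
      Finset.card_erase_of_mem (Finset.mem_univ _), Finset.card_univ]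
    have : 0 < Fintype.card I := Fintype.card_pos_iff.mpr ⟨i₀⟩
    omega
  have hmemd : ∀ x ∈ d, ∃ k, k ≠ i₀ ∧ s k = x := by
    intro x hx
    obtain ⟨k, hk, rfl⟩ := Finset.mem_image.mp hx
    exact ⟨k, Finset.ne_of_mem_erase hk, rfl⟩
  have hskd : ∀ k, k ≠ i₀ → s k ∈ d := fun k hk =>
    Finset.mem_image_of_mem s (Finset.mem_erase.mpr ⟨hk, Finset.mem_univ _⟩)
  let N : Finset V := Finset.univ.filter (fun v => v ∉ Set.range s)
  have memN : ∀ v, v ∈ N ↔ v ∉ Set.range s := by intro v; simp [N]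
  obtain ⟨y, hyN, hymax⟩ := Finset.exists_max_image N (u i₀)
    (by obtain ⟨v, hv⟩ := hT; exact ⟨v, (memN v).2 hv⟩)
  have hys := (memN y).1 hyN
  have hyd : y ∉ d := by
    intro h
    obtain ⟨k, -, hk⟩ := hmemd y h
    exact hys ⟨k, hk⟩
  have hdom : ScarfDom u (insert y d) := by
    intro t
    by_cases ht : t ∈ Set.range s
    · obtain ⟨k, rfl⟩ := ht
      exact ⟨k, fun x _ => hs k x⟩
    · refine ⟨i₀, fun x hx => ?_⟩
      rcases Finset.mem_insert.mp hx with rfl | hx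
      · exact hymax t ((memN t).2 ht)
      · obtain ⟨k, hk, rfl⟩ := hmemd x hx
        exact (hbig i₀ k t hk ht).le
  refine ⟨scarf_anti (Finset.subset_insert y d) hdom, ?_⟩
  rw [Finset.card_eq_one]
  refine ⟨insert y d, ?_⟩
  ext r
  simp only [Finset.mem_filter, Finset.mem_univ, true_and, Finset.mem_singleton]
  constructor
  · rintro ⟨⟨hrd, hrc⟩, hdr⟩
    obtain ⟨w, hwd, rfl⟩ : ∃ w, w ∉ d ∧ insert w d = r := by
      have h1 : (r \ d).card = 1 := by rw [Finset.card_sdiff_of_subset hdr]; omega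
      obtain ⟨w, hw⟩ := Finset.card_eq_one.mp h1
      have hw' : w ∈ r \ d := by rw [hw]; simp
      refine ⟨w, (Finset.mem_sdiff.mp hw').2, ?_⟩
      rw [Finset.insert_eq, ← hw, Finset.sdiff_union_of_subset hdr]
    have hyw : u i₀ y ≤ u i₀ w := by
      obtain ⟨l, hl⟩ := hrd y
      by_cases h : l = i₀
      · subst h; exact hl w (Finset.mem_insert_self _ _)
      · exfalso
        have h1 := hl _ (Finset.mem_insert_of_mem (hskd l h))
        exact hys ⟨l, (hu l (le_antisymm h1 (hs l y))).symm⟩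
    have hws : w ∉ Set.range s := by
      rintro ⟨k, rfl⟩
      by_cases hk : k = i₀
      · subst hk
        exact hys ⟨k, (hu k (le_antisymm hyw (hs k y))).symm⟩
      · exact hwd (hskd k hk)
    rw [hu i₀ (le_antisymm hyw (hymax w ((memN w).2 hws)))]
  · rintro rfl
    exact ⟨⟨hdom, by rw [Finset.card_insert_of_notMem hyd]; omega⟩, Finset.subset_insert _ _⟩

/-- Scarf's combinatorial lemma. -/
theorem scarf (c : V → I) (u : I → V → α) (hu : ∀ i, Function.Injective (u i))
    (s : I → V) (hs : ∀ i v, u i (s i) ≤ u i v) (hcs : ∀ i, c (s i) = i)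
    (hbig : ∀ i j v, j ≠ i → v ∉ Set.range s → u i v < u i (s j))
    (hT : ∃ v, v ∉ Set.range s) [Nonempty I] :
    ∃ σ : Finset V, ScarfDom u σ ∧ ∀ i, ∃ x ∈ σ, c x = i := by
  classical
  by_contra hcon
  have hsinj : Function.Injective s := fun a b h => by rw [← hcs a, ← hcs b, h]
  obtain ⟨i₀⟩ := ‹Nonempty I›
  let Rm : Finset (Finset V) := Finset.univ.filter
    (fun r => ScarfDom u r ∧ r.card = Fintype.card I)
  let Dr : Finset (Finset V) := Finset.univ.filter
    (fun d => ScarfDom u d ∧ d.image c = Finset.univ.erase i₀ ∧ d.card + 1 = Fintype.card I)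
  have hdc := Finset.sum_card_bipartiteAbove_eq_sum_card_bipartiteBelow
    (s := Dr) (t := Rm) (fun d r => d ⊆ r)
  have hR : Even (∑ r ∈ Rm, (Finset.bipartiteBelow (fun d r => d ⊆ r) Dr r).card) := by
    refine Finset.even_sum _ (fun r hr => ?_)
    have hr' : ScarfDom u r ∧ r.card = Fintype.card I := by simpa [Rm] using hr
    have := scarf_room_even c u i₀ r hr'.1 hr'.2 (by
      intro h
      apply hcon
      refine ⟨r, hr'.1, fun i => ?_⟩
      have : i ∈ r.image c := by rw [h]; simp
      simpa using this)
    rw [← Finset.filter_filter] at this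
    exact this
  obtain ⟨hb1, hb2⟩ := scarf_boundary u hu s hs hsinj hbig i₀ hT
  have hσ : (Finset.univ.erase i₀).image s ∈ Dr := by
    simp only [Dr, Finset.mem_filter, Finset.mem_univ, true_and]
    refine ⟨hb1, ?_, ?_⟩
    · rw [Finset.image_image]
      have : c ∘ s = id := funext hcs
      rw [this, Finset.image_id]
    · rw [Finset.card_image_of_injective _ hsinj,
        Finset.card_erase_of_mem (Finset.mem_univ _), Finset.card_univ]
      have : 0 < Fintype.card I := Fintype.card_pos_iff.mpr ⟨i₀⟩
      omega
  rw [← hdc, ← Finset.add_sum_erase _ _ hσ] at hR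
  have h1 : (Finset.bipartiteAbove (fun d r => d ⊆ r) Rm ((Finset.univ.erase i₀).image s)).card
      = 1 := by
    rw [← Finset.filter_filter] at hb2
    exact hb2
  have h2 : Even (∑ d ∈ Dr.erase ((Finset.univ.erase i₀).image s),
      (Finset.bipartiteAbove (fun d r => d ⊆ r) Rm d).card) := by
    refine Finset.even_sum _ (fun d hd => ?_)
    obtain ⟨hne, hd⟩ := Finset.mem_erase.mp hd
    simp only [Dr, Finset.mem_filter, Finset.mem_univ, true_and] at hd
    have := scarf_door_even c u hu s hs hcs hbig i₀ d hd.1 hd.2.1 hd.2.2 hne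
    rw [← Finset.filter_filter] at this
    exact this
  rw [h1] at hR
  obtain ⟨a, ha⟩ := hR
  obtain ⟨b, hb⟩ := h2
  omega

end Scarf

section Brouwer

lemma brouwer_approx {I : Type*} [Fintype I] [DecidableEq I] [Nonempty I]
    (f : (I → ℝ) → (I → ℝ)) (hf : Set.MapsTo f (stdSimplex ℝ I) (stdSimplex ℝ I))
    (ε : ℝ) (hε : 0 < ε) :
    ∃ x ∈ stdSimplex ℝ I, ∀ i, ∃ y ∈ stdSimplex ℝ I,
      dist y x ≤ Fintype.card I * ε ∧ y i ≤ f y i + Fintype.card I * ε := by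
  classical
  obtain ⟨T, hTs, hTfin, hTcov⟩ := (isCompact_stdSimplex ℝ I).finite_cover_balls hε
  have : Fintype T := hTfin.fintype
  have hcol : ∀ x : T, ∃ i, (x : I → ℝ) i ≤ f x i := by
    intro x
    by_contra hcon
    push Not at hcon
    have h1 := (hTs x.2).2
    have h2 := (hf (hTs x.2)).2
    have := Finset.sum_lt_sum_of_nonempty (s := Finset.univ) Finset.univ_nonempty
      (fun i _ => hcon i)
    linarith
  choose col hcol using hcol
  let a : I → (T ⊕ I) → ℝ := fun i v => Sum.elim (fun x : T => (x : I → ℝ) i)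
    (fun j => if j = i then -1 else 2) v
  let u : I → (T ⊕ I) → ℝ ×ₗ Fin (Fintype.card (T ⊕ I)) :=
    fun i v => toLex (a i v, Fintype.equivFin _ v)
  have hu : ∀ i, Function.Injective (u i) := by
    intro i v w h
    have h' : (a i v, Fintype.equivFin _ v) = (a i w, Fintype.equivFin _ w) := toLex.injective h
    exact (Fintype.equivFin _).injective (Prod.ext_iff.mp h').2
  have hlt : ∀ i v w, a i v < a i w → u i v < u i w := by
    intro i v w h
    exact Prod.Lex.toLex_lt_toLex.mpr (Or.inl h)
  have hle : ∀ i v w, u i v ≤ u i w → a i v ≤ a i w := by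
    intro i v w h
    by_contra hc
    exact absurd h (not_le.mpr (hlt i w v (not_le.mp hc)))
  have hT01 : ∀ (x : T) i, 0 ≤ (x : I → ℝ) i ∧ (x : I → ℝ) i ≤ 1 := by
    intro x i
    exact ⟨(hTs x.2).1 i, (mem_Icc_of_mem_stdSimplex (hTs x.2) i).2⟩
  obtain ⟨x₀, hx₀⟩ : (stdSimplex ℝ I).Nonempty :=
    ⟨_, single_mem_stdSimplex ℝ (Classical.arbitrary I)⟩
  have hTne : Nonempty T := by
    have := hTcov hx₀
    simp only [Set.mem_iUnion] at this
    obtain ⟨t, ht, -⟩ := this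
    exact ⟨⟨t, ht⟩⟩
  obtain ⟨σ, hσ, hσc⟩ := scarf (V := T ⊕ I) (Sum.elim col id) u hu Sum.inr
    (by
      intro i v
      by_cases hv : v = Sum.inr i
      · rw [hv]
      apply (hlt _ _ _ _).le
      rcases v with x | j
      · simp only [a, Sum.elim_inr, Sum.elim_inl, if_true]
        linarith [(hT01 x i).1]
      · have : j ≠ i := fun h => hv (by rw [h])
        simp only [a, Sum.elim_inr, if_true, if_neg this]
        norm_num)
    (by intro i; rfl)
    (by
      intro i j v hji hv
      apply hlt
      rcases v with x | k
      · simp only [a, Sum.elim_inr, Sum.elim_inl, if_neg hji]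
        linarith [(hT01 x i).2]
      · exact absurd ⟨k, rfl⟩ hv)
    (by
      obtain ⟨t⟩ := hTne
      exact ⟨Sum.inl t, by simp⟩)
  -- active indices
  let C : Finset I := Finset.univ.filter (fun i => (Sum.inr i : T ⊕ I) ∉ σ)
  have memC : ∀ i, i ∈ C ↔ (Sum.inr i : T ⊕ I) ∉ σ := by intro i; simp [C]
  have hdomT : ∀ t : T, ∃ i ∈ C, ∀ x : T, Sum.inl x ∈ σ → (t : I → ℝ) i ≤ (x : I → ℝ) i := by
    intro t
    obtain ⟨i, hi⟩ := hσ (Sum.inl t)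
    refine ⟨i, ?_, fun x hx => hle i _ _ (hi _ hx)⟩
    rw [memC]
    intro h
    have := hle i _ _ (hi _ h)
    simp only [a, Sum.elim_inr, Sum.elim_inl, if_true] at this
    linarith [(hT01 t i).1]
  have hCne : C.Nonempty := by
    obtain ⟨t⟩ := hTne
    obtain ⟨i, hi, -⟩ := hdomT t
    exact ⟨i, hi⟩
  have hcolC : ∀ i ∈ C, ∃ x : T, Sum.inl x ∈ σ ∧ col x = i := by
    intro i hi
    obtain ⟨v, hv, hvc⟩ := hσc i
    rcases v with x | j
    · exact ⟨x, hv, hvc⟩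
    · exfalso
      have : j = i := hvc
      subst this
      exact (memC j).1 hi hv
  let S : Finset T := Finset.univ.filter (fun x => (Sum.inl x : T ⊕ I) ∈ σ)
  have memS : ∀ x, x ∈ S ↔ (Sum.inl x : T ⊕ I) ∈ σ := by intro i; simp [S]
  have hSne : S.Nonempty := by
    obtain ⟨i, hi⟩ := hCne
    obtain ⟨x, hx, -⟩ := hcolC i hi
    exact ⟨x, (memS x).2 hx⟩
  have hex : ∀ i, ∃ x ∈ S, ∀ y ∈ S, (x : I → ℝ) i ≤ (y : I → ℝ) i := fun i =>
    Finset.exists_min_image S (fun x => (x : I → ℝ) i) hSne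
  choose mp hmpS hmp using hex
  let m : I → ℝ := fun i => (mp i : I → ℝ) i
  have hm0 : ∀ i, 0 ≤ m i := fun i => (hT01 (mp i) i).1
  have hCpos : (0 : ℝ) < C.card := by exact_mod_cast hCne.card_pos
  have hCn : (C.card : ℝ) ≤ Fintype.card I := by exact_mod_cast Finset.card_le_univ C
  have hsumle : ∀ x ∈ S, ∑ i ∈ C, m i ≤ ∑ i ∈ C, (x : I → ℝ) i := fun x hx =>
    Finset.sum_le_sum (fun i _ => hmp i x hx)
  have hC1 : ∀ x : T, ∑ i ∈ C, (x : I → ℝ) i ≤ 1 := by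
    intro x
    rw [← (hTs x.2).2]
    exact Finset.sum_le_sum_of_subset_of_nonneg (Finset.subset_univ _) (fun i _ _ => (hT01 x i).1)
  have hgap : 1 - ∑ i ∈ C, m i ≤ Fintype.card I * ε := by
    obtain ⟨x, hx⟩ := hSne
    have hg0 : 0 ≤ 1 - ∑ i ∈ C, m i := by linarith [hsumle x hx, hC1 x]
    let p : I → ℝ := fun i => if i ∈ C then m i + (1 - ∑ i ∈ C, m i) / C.card else 0
    have hp : p ∈ stdSimplex ℝ I := by
      constructor
      · intro i
        simp only [p]
        split_ifs
        · have := hm0 i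
          positivity
        · exact le_refl _
      · simp only [p]
        rw [Finset.sum_ite_mem, Finset.univ_inter, Finset.sum_add_distrib, Finset.sum_const,
          nsmul_eq_mul]
        field_simp
        ring
    have := hTcov hp
    simp only [Set.mem_iUnion] at this
    obtain ⟨t, ht, htp⟩ := this
    obtain ⟨i, hiC, hi⟩ := hdomT ⟨t, ht⟩
    have h1 : t i ≤ m i := hi (mp i) ((memS _).1 (hmpS i))
    have h2 : p i - t i < ε := by
      have := (dist_le_pi_dist p t i).trans_lt (Metric.mem_ball.mp htp)
      rw [Real.dist_eq] at this
      exact (le_abs_self _).trans_lt this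
    have h3 : p i = m i + (1 - ∑ i ∈ C, m i) / C.card := by simp only [p, if_pos hiC]
    have h4 : (1 - ∑ i ∈ C, m i) / C.card ≤ ε := by linarith
    rw [div_le_iff₀ hCpos] at h4
    nlinarith
  -- coordinates are close to m on C and close to zero off C
  have hclose : ∀ x ∈ S, ∀ i ∈ C, m i ≤ (x : I → ℝ) i ∧
      (x : I → ℝ) i ≤ m i + Fintype.card I * ε := by
    intro x hx i hi
    refine ⟨hmp i x hx, ?_⟩
    have h1 : (x : I → ℝ) i - m i ≤ ∑ i ∈ C, ((x : I → ℝ) i - m i) :=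
      Finset.single_le_sum (f := fun i => (x : I → ℝ) i - m i)
        (fun j _ => sub_nonneg.mpr (hmp j x hx)) hi
    rw [Finset.sum_sub_distrib] at h1
    linarith [hC1 x]
  have hoff : ∀ x ∈ S, ∀ i, i ∉ C → (x : I → ℝ) i ≤ Fintype.card I * ε := by
    intro x hx i hi
    have h1 : (x : I → ℝ) i + ∑ j ∈ C, (x : I → ℝ) j ≤ 1 := by
      rw [← Finset.sum_insert hi, ← (hTs x.2).2]
      exact Finset.sum_le_sum_of_subset_of_nonneg (Finset.subset_univ _)
        (fun i _ _ => (hT01 x i).1)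
    linarith [hsumle x hx]
  have hne : 0 ≤ Fintype.card I * ε := by positivity
  obtain ⟨x, hx⟩ := hSne
  refine ⟨x, hTs x.2, fun i => ?_⟩
  by_cases hi : i ∈ C
  · obtain ⟨y, hy, hyc⟩ := hcolC i hi
    have hyS := (memS y).2 hy
    refine ⟨y, hTs y.2, ?_, ?_⟩
    · rw [dist_pi_le_iff hne]
      intro j
      rw [Real.dist_eq, abs_le]
      by_cases hj : j ∈ C
      · have h1 := hclose x hx j hj
        have h2 := hclose y hyS j hj
        constructor <;> linarith
      · have h1 := hoff x hx j hj
        have h2 := hoff y hyS j hj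
        have h3 := (hT01 x j).1
        have h4 := (hT01 y j).1
        constructor <;> linarith
    · have := hcol y
      rw [hyc] at this
      linarith
  · refine ⟨x, hTs x.2, by simpa using hne, ?_⟩
    have := (hf (hTs x.2)).1 i
    linarith [hoff x hx i hi]

/-- Brouwer's fixed point theorem on the standard simplex. -/
theorem brouwer_simplex {I : Type*} [Fintype I] [Nonempty I]
    (f : (I → ℝ) → (I → ℝ)) (hf : Set.MapsTo f (stdSimplex ℝ I) (stdSimplex ℝ I))
    (hc : ContinuousOn f (stdSimplex ℝ I)) : ∃ x ∈ stdSimplex ℝ I, f x = x := by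
  classical
  have hpos : (0 : ℝ) < Fintype.card I := by exact_mod_cast Fintype.card_pos
  have hex : ∀ n : ℕ, ∃ x ∈ stdSimplex ℝ I, ∀ i, ∃ y ∈ stdSimplex ℝ I,
      dist y x ≤ 1 / ((n : ℝ) + 1) ∧ y i ≤ f y i + 1 / ((n : ℝ) + 1) := by
    intro n
    have := brouwer_approx f hf (1 / ((n : ℝ) + 1) / Fintype.card I) (by positivity)
    rwa [mul_div_cancel₀ _ hpos.ne'] at this
  choose x hx y hy hd hle using hex
  obtain ⟨z, hz, φ, hφ, hlim⟩ := (isCompact_stdSimplex ℝ I).tendsto_subseq hx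
  have h0 : Tendsto (fun n : ℕ => 1 / ((φ n : ℝ) + 1)) atTop (𝓝 0) :=
    tendsto_one_div_add_atTop_nhds_zero_nat.comp hφ.tendsto_atTop
  have hzi : ∀ i, z i ≤ f z i := by
    intro i
    have hyl : Tendsto (fun n => y (φ n) i) atTop (𝓝 z) := by
      refine (tendsto_iff_of_dist ?_).mp hlim
      refine squeeze_zero (fun _ => dist_nonneg) (fun n => ?_) h0
      rw [dist_comm]
      exact hd (φ n) i
    have hfl : Tendsto (fun n => f (y (φ n) i)) atTop (𝓝 (f z)) :=
      (hc z hz).tendsto.comp (tendsto_nhdsWithin_iff.mpr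
        ⟨hyl, Eventually.of_forall (fun n => hy (φ n) i)⟩)
    have h1 := ((continuous_apply i).tendsto z).comp hyl
    have h2 := (((continuous_apply i).tendsto (f z)).comp hfl).add h0
    rw [add_zero] at h2
    exact le_of_tendsto_of_tendsto' h1 h2 (fun n => hle (φ n) i)
  refine ⟨z, hz, ?_⟩
  have hs : ∑ i, z i = ∑ i, f z i := by rw [hz.2, (hf hz).2]
  funext i
  exact ((Finset.sum_eq_sum_iff_of_le (fun i _ => hzi i)).mp hs i (Finset.mem_univ i)).symm

end Brouwer

/-- Schauder-type theorem for an arbitrary self-map of a compact convex set. -/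
theorem schauder_envelope {X : Type*} [NormedAddCommGroup X] [NormedSpace ℝ X]
    (C : Set X) (hC : IsCompact C) (hconv : Convex ℝ C) (hne : C.Nonempty)
    (F : X → X) (hF : Set.MapsTo F C C) : ∃ x ∈ C, x ∈ ccEnvelope C F x := by
  classical
  have step : ∀ ε : ℝ, 0 < ε → ∃ x ∈ C, x ∈ convexHull ℝ (F '' (closedBall x ε ∩ C)) := by
    intro ε hε
    obtain ⟨t, htC, htfin, htcov⟩ := hC.finite_cover_balls hε
    have : Fintype t := htfin.fintype
    have htne : Nonempty t := by
      obtain ⟨x, hx⟩ := hne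
      have := htcov hx
      simp only [Set.mem_iUnion] at this
      obtain ⟨y, hy, -⟩ := this
      exact ⟨⟨y, hy⟩⟩
    let ψ : t → X → ℝ := fun i x => max 0 (ε - dist x i)
    let S : X → ℝ := fun x => ∑ i, ψ i x
    have hψ0 : ∀ i x, 0 ≤ ψ i x := fun i x => le_max_left _ _
    have hψc : ∀ i, Continuous (ψ i) := fun i => by fun_prop
    have hSc : Continuous S := by fun_prop
    have hS : ∀ x ∈ C, 0 < S x := by
      intro x hx
      have := htcov hx
      simp only [Set.mem_iUnion] at this
      obtain ⟨y, hy, hxy⟩ := this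
      refine Finset.sum_pos' (fun i _ => hψ0 i x) ⟨⟨y, hy⟩, Finset.mem_univ _, ?_⟩
      exact lt_max_of_lt_right (sub_pos.mpr (Metric.mem_ball.mp hxy))
    let Φ : (t → ℝ) → X := fun p => ∑ i, p i • F i
    have hΦc : Continuous Φ := by fun_prop
    have hΦ : ∀ p ∈ stdSimplex ℝ t, Φ p ∈ C := by
      intro p hp
      exact hconv.sum_mem (fun i _ => hp.1 i) hp.2 (fun i _ => hF (htC i.2))
    obtain ⟨p, hp, hpf⟩ := brouwer_simplex (I := t) (fun p i => ψ i (Φ p) / S (Φ p))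
      (by
        intro p hp
        refine ⟨fun i => div_nonneg (hψ0 _ _) (hS _ (hΦ p hp)).le, ?_⟩
        rw [← Finset.sum_div]
        exact div_self (hS _ (hΦ p hp)).ne')
      (by
        apply continuousOn_pi.mpr
        intro i
        exact ((hψc i).comp hΦc).continuousOn.div (hSc.comp hΦc).continuousOn
          (fun p hp => (hS _ (hΦ p hp)).ne'))
    refine ⟨Φ p, hΦ p hp, ?_⟩
    have hsum : Φ p = ∑ i ∈ Finset.univ.filter (fun i => p i ≠ 0), p i • F i := by
      rw [Finset.sum_filter_of_ne]
      intro i _ h h0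
      exact h (by rw [h0, zero_smul])
    have hmem : ∀ i, p i ≠ 0 → F i ∈ F '' (closedBall (Φ p) ε ∩ C) := by
      intro i hi
      refine ⟨i, ⟨?_, htC i.2⟩, rfl⟩
      rw [Metric.mem_closedBall, dist_comm]
      by_contra hcon
      apply hi
      rw [← hpf]
      have : ψ i (Φ p) = 0 := max_eq_left (by linarith)
      simp only [this, zero_div]
    have hmain : ∑ i ∈ Finset.univ.filter (fun i => p i ≠ 0), p i • F i ∈
        convexHull ℝ (F '' (closedBall (Φ p) ε ∩ C)) := by
      refine (convex_convexHull ℝ _).sum_mem (fun i _ => hp.1 i) ?_ ?_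
      · rw [Finset.sum_filter_ne_zero]; exact hp.2
      · intro i hi
        exact subset_convexHull ℝ _ (hmem i (Finset.mem_filter.mp hi).2)
    rwa [← hsum] at hmain
  have hex : ∀ n : ℕ, ∃ x ∈ C, x ∈ convexHull ℝ (F '' (closedBall x (1 / ((n : ℝ) + 1)) ∩ C)) :=
    fun n => step _ (by positivity)
  choose x hx hxm using hex
  obtain ⟨z, hz, φ, hφ, hlim⟩ := hC.tendsto_subseq hx
  have h0 : Tendsto (fun n : ℕ => 1 / ((φ n : ℝ) + 1)) atTop (𝓝 0) :=
    tendsto_one_div_add_atTop_nhds_zero_nat.comp hφ.tendsto_atTop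
  refine ⟨z, hz, ?_⟩
  simp only [ccEnvelope, Set.mem_iInter]
  intro ε hε
  refine mem_closure_of_tendsto hlim ?_
  have e1 : ∀ᶠ n in atTop, 1 / ((φ n : ℝ) + 1) < ε / 2 := h0.eventually_lt_const (by linarith)
  have e2 : ∀ᶠ n in atTop, dist (x (φ n)) z < ε / 2 :=
    (Metric.tendsto_nhds.mp hlim) (ε / 2) (by linarith)
  filter_upwards [e1, e2] with n h1 h2
  refine convexHull_mono (Set.image_mono (Set.inter_subset_inter_left _ ?_)) (hxm (φ n))
  exact Metric.closedBall_subset_closedBall' (by linarith)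

/-- Envelope of a perturbed rescaled composition. -/
lemma envelope_comp {X : Type*} [NormedAddCommGroup X] [NormedSpace ℝ X]
    (C U : Set X) (F T g : X → X) (c d : X → ℝ) (w : X) (M : ℝ)
    (hM : ∀ y ∈ U, ‖T y‖ ≤ M) (hg : ∀ x ∈ C, g x ∈ U)
    (hF : ∀ x, F x = c x • T (g x) + d x • w) (x : X)
    (hc : ContinuousAt c x) (hd : ContinuousAt d x) (A : Set X) (hA : Convex ℝ A)
    (ε : ℝ) (hε : 0 < ε)
    (hAg : ∀ y ∈ C, dist y x ≤ ε → c x • T (g y) + d x • w ∈ A) :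
    ccEnvelope C F x ⊆ closure A := by
  intro z hz
  rw [closure_eq_iInter_cthickening]
  simp only [Set.mem_iInter]
  intro δ hδ
  have h1 : Tendsto (fun y => |c y - c x| * M + |d y - d x| * ‖w‖) (𝓝 x) (𝓝 0) := by
    have e1 : Tendsto (fun y => |c y - c x|) (𝓝 x) (𝓝 0) := by
      have := (hc.tendsto.sub_const (c x)).abs
      simpa using this
    have e2 : Tendsto (fun y => |d y - d x|) (𝓝 x) (𝓝 0) := by
      have := (hd.tendsto.sub_const (d x)).abs
      simpa using this
    simpa using (e1.mul_const M).add (e2.mul_const ‖w‖)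
  obtain ⟨η, hη, hηs⟩ := Metric.eventually_nhds_iff.mp (h1.eventually_lt_const hδ)
  have hsub : F '' (closedBall x (min ε (η / 2)) ∩ C) ⊆ cthickening δ A := by
    rintro _ ⟨y, ⟨hyb, hyC⟩, rfl⟩
    rw [Metric.mem_closedBall] at hyb
    refine mem_cthickening_of_dist_le _ _ δ A (hAg y hyC (hyb.trans (min_le_left _ _))) ?_
    have hlt := hηs (y := y) (by
      have := hyb.trans (min_le_right _ _)
      linarith)
    rw [hF, dist_eq_norm]
    have : c y • T (g y) + d y • w - (c x • T (g y) + d x • w)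
        = (c y - c x) • T (g y) + (d y - d x) • w := by module
    rw [this]
    refine (norm_add_le _ _).trans (le_trans ?_ hlt.le)
    rw [norm_smul, norm_smul, Real.norm_eq_abs, Real.norm_eq_abs]
    gcongr
    exact hM _ (hg y hyC)
  have hz' : z ∈ closure (convexHull ℝ (F '' (closedBall x (min ε (η / 2)) ∩ C))) := by
    simp only [ccEnvelope, Set.mem_iInter] at hz
    exact hz _ (by positivity)
  exact closure_minimal (convexHull_min hsub (hA.cthickening δ)) isClosed_cthickening hz'

/-- Krasnoselskii fixed point theorem for discontinuous operators, first version. -/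
theorem krasnoselskii_discontinuous
    {X : Type*} [NormedAddCommGroup X] [NormedSpace ℝ X] [CompleteSpace X]
    (K : Set X) (hKcl : IsClosed K) (hKconv : Convex ℝ K)
    (hKcone : ∀ x ∈ K, ∀ l : ℝ, 0 ≤ l → l • x ∈ K)
    (hKpointed : ∀ x ∈ K, -x ∈ K → x = 0)
    (R r₁ r₂ : ℝ) (hr₁ : 0 < r₁) (hr₂ : 0 < r₂) (hr₁R : r₁ ≤ R) (hr₂R : r₂ ≤ R)
    (hne : r₁ ≠ r₂)
    (T : X → X) (hTmaps : ∀ x ∈ closedBall (0:X) R ∩ K, T x ∈ K)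
    (hTcompact : IsCompact (closure (T '' (closedBall (0:X) R ∩ K))))
    (hcond : ∀ x ∈ closedBall (0:X) R ∩ K,
      x ∈ ccEnvelope (closedBall (0:X) R ∩ K) T x → x = T x)
    (ha : ∀ x ∈ K, ‖x‖ = r₁ → ∀ l : ℝ, 1 ≤ l →
      l • x ∉ ccEnvelope (closedBall (0:X) R ∩ K) T x)
    (hb : ∃ w ∈ K, ‖w‖ ≠ 0 ∧ ∀ l : ℝ, 0 ≤ l → ∀ x ∈ K, ‖x‖ = r₂ →
      ∀ y ∈ ccEnvelope (closedBall (0:X) R ∩ K) T x, x ≠ y + l • w) :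
    ∃ x ∈ K, T x = x ∧ min r₁ r₂ < ‖x‖ ∧ ‖x‖ < max r₁ r₂ := by
  obtain ⟨w, hwK, hw0, hb⟩ := hb
  set U := closedBall (0:X) R ∩ K with hU
  have h0K : (0:X) ∈ K := by simpa using hKcone w hwK 0 le_rfl
  have hadd : ∀ x ∈ K, ∀ y ∈ K, x + y ∈ K := by
    intro x hx y hy
    have h := hKconv (hKcone x hx 2 (by norm_num)) (hKcone y hy 2 (by norm_num))
      (a := 1/2) (b := 1/2) (by norm_num) (by norm_num) (by norm_num)
    simpa [smul_smul] using h
  obtain ⟨M, hM⟩ : ∃ M, ∀ y ∈ U, ‖T y‖ ≤ M := by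
    obtain ⟨M, hM⟩ := hTcompact.isBounded.exists_norm_le
    exact ⟨M, fun y hy => hM _ (subset_closure (Set.mem_image_of_mem T hy))⟩
  set m := min r₁ r₂ with hm
  have hmpos : 0 < m := lt_min hr₁ hr₂
  -- the radial reparametrisation
  let τ : ℝ → ℝ := fun ρ => max 0 (min 1 (ρ - 1))
  have hτ0 : ∀ ρ, 0 ≤ τ ρ := fun ρ => le_max_left _ _
  have hτ1 : ∀ ρ, τ ρ ≤ 1 := fun ρ => max_le zero_le_one (min_le_left _ _)
  let φ : ℝ → ℝ := fun ρ => r₂ + (r₁ - r₂) * τ ρ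
  have hφm : ∀ ρ, m ≤ φ ρ := by
    intro ρ
    have h1 : m ≤ r₁ := min_le_left _ _
    have h2 : m ≤ r₂ := min_le_right _ _
    have := hτ0 ρ
    have := hτ1 ρ
    simp only [φ]
    nlinarith
  have hφR : ∀ ρ, φ ρ ≤ R := by
    intro ρ
    have := hτ0 ρ
    have := hτ1 ρ
    simp only [φ]
    nlinarith
  have hφpos : ∀ ρ, 0 < φ ρ := fun ρ => hmpos.trans_le (hφm ρ)
  have hφc : Continuous φ := by fun_prop
  let c : X → ℝ := fun x => min ‖x‖ 2 / φ ‖x‖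
  let d : X → ℝ := fun x => max (1 - ‖x‖) 0
  let g : X → X := fun x => (φ ‖x‖ / ‖x‖) • x
  let F : X → X := fun x => c x • T (g x) + d x • w
  have hcc : Continuous c :=
    (continuous_norm.min continuous_const).div (hφc.comp continuous_norm)
      (fun x => (hφpos _).ne')
  have hdc : Continuous d := by fun_prop
  have hgnorm : ∀ x, x ≠ 0 → ‖g x‖ = φ ‖x‖ := by
    intro x hx
    have : ‖x‖ ≠ 0 := norm_ne_zero_iff.mpr hx
    simp only [g]
    rw [norm_smul, Real.norm_of_nonneg (div_nonneg (hφpos _).le (norm_nonneg _)),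
      div_mul_cancel₀ _ this]
  have hgK : ∀ x ∈ K, g x ∈ K := fun x hx =>
    hKcone x hx _ (div_nonneg (hφpos _).le (norm_nonneg _))
  have hgU : ∀ x ∈ K, g x ∈ U := by
    intro x hx
    refine ⟨?_, hgK x hx⟩
    rw [mem_closedBall_zero_iff]
    by_cases h : x = 0
    · rw [h]; simp only [g, smul_zero, norm_zero]; linarith
    · rw [hgnorm x h]; exact hφR _
  -- the compact convex domain
  let S : Set X := (fun p : ℝ × X × ℝ => p.1 • p.2.1 + p.2.2 • w) ''
    (Set.Icc (0:ℝ) (2 / m) ×ˢ (closure (T '' U) ×ˢ Set.Icc (0:ℝ) 1))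
  have hS : IsCompact S :=
    (isCompact_Icc.prod (hTcompact.prod isCompact_Icc)).image (by fun_prop)
  let C : Set X := closure (convexHull ℝ S)
  have hTK : closure (T '' U) ⊆ K := by
    apply closure_minimal _ hKcl
    rintro _ ⟨y, hy, rfl⟩
    exact hTmaps y hy
  have hSK : S ⊆ K := by
    rintro _ ⟨⟨a, y, b⟩, ⟨ha', hy, hb'⟩, rfl⟩
    exact hadd _ (hKcone _ (hTK hy) _ ha'.1) _ (hKcone _ hwK _ hb'.1)
  have hCK : C ⊆ K := closure_minimal (convexHull_min hSK hKconv) hKcl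
  have hC : IsCompact C := isCompact_iff_totallyBounded_isComplete.mpr
    ⟨(totallyBounded_convexHull.mpr hS.totallyBounded).closure, isClosed_closure.isComplete⟩
  have hCconv : Convex ℝ C := (convex_convexHull ℝ S).closure
  have hFS : ∀ x ∈ K, F x ∈ C := by
    intro x hx
    refine subset_closure (subset_convexHull ℝ S ⟨(c x, T (g x), d x), ⟨⟨?_, ?_⟩, ?_, ?_, ?_⟩, rfl⟩)
    · exact div_nonneg (le_min (norm_nonneg _) (by norm_num)) (hφpos _).le
    · exact div_le_div₀ (by norm_num) (min_le_right _ _) hmpos (hφm _)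
    · exact subset_closure (Set.mem_image_of_mem T (hgU x hx))
    · exact le_max_right _ _
    · exact max_le (by linarith [norm_nonneg x]) zero_le_one
  obtain ⟨x, hxC, hxE⟩ := schauder_envelope C hC hCconv ⟨_, hFS 0 h0K⟩ F
    (fun x hx => hFS x (hCK hx))
  have hxK := hCK hxC
  have hx0 : x ≠ 0 := by
    rintro rfl
    have := envelope_comp C U F T g c d w M hM (fun x hx => hgU x (hCK hx)) (fun _ => rfl) 0
      hcc.continuousAt hdc.continuousAt {w} (convex_singleton w) 1 one_pos
      (by intro y _ _; simp [c, d]) hxE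
    rw [closure_singleton, Set.mem_singleton_iff] at this
    exact hw0 (by rw [← this, norm_zero])
  have hρ : 0 < ‖x‖ := norm_pos_iff.mpr hx0
  have hcx : 0 < c x := div_pos (lt_min hρ (by norm_num)) (hφpos _)
  have hgc : ContinuousAt g x :=
    ((hφc.comp continuous_norm).continuousAt.div continuous_norm.continuousAt hρ.ne').smul
      continuousAt_id
  obtain ⟨t, htE, hxt⟩ : ∃ t ∈ ccEnvelope U T (g x), x = c x • t + d x • w := by
    refine ⟨(c x)⁻¹ • (x - d x • w), ?_, ?_⟩
    · simp only [ccEnvelope, Set.mem_iInter]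
      intro ε hε
      obtain ⟨η, hη, hηs⟩ := Metric.continuousAt_iff.mp hgc ε hε
      let B := convexHull ℝ (T '' (closedBall (g x) ε ∩ U))
      have := envelope_comp C U F T g c d w M hM (fun x hx => hgU x (hCK hx)) (fun _ => rfl) x
        hcc.continuousAt hdc.continuousAt ((fun z => (c x)⁻¹ • (z - d x • w)) ⁻¹' B)
        (by
          have hB : Convex ℝ B := convex_convexHull ℝ _
          intro p hp q hq a b ha' hb' hab
          have h := hB hp hq ha' hb' hab
          simp only [Set.mem_preimage] at h ⊢
          convert h using 1
          obtain rfl : b = 1 - a := by linarith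
          module) (η / 2) (by linarith)
        (by
          intro y hy hyx
          simp only [Set.mem_preimage, add_sub_cancel_right]
          rw [inv_smul_smul₀ hcx.ne']
          apply subset_convexHull
          exact ⟨g y, ⟨(hηs (by linarith)).le, hgU y (hCK hy)⟩, rfl⟩) hxE
      have hcont : Continuous (fun z : X => (c x)⁻¹ • (z - d x • w)) := by fun_prop
      exact hcont.closure_preimage_subset B this
    · rw [smul_inv_smul₀ hcx.ne']; abel
  rcases le_or_gt ‖x‖ 1 with h1 | h1
  · exfalso
    have hφ2 : φ ‖x‖ = r₂ := by
      have : τ ‖x‖ = 0 := max_eq_left ((min_le_right _ _).trans (by linarith))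
      simp only [φ, this]; ring
    have hcv : c x = ‖x‖ / r₂ := by
      simp only [c, hφ2, min_eq_left (h1.trans one_le_two)]
    refine hb (r₂ / ‖x‖ * d x) (mul_nonneg (by positivity) (le_max_right _ _)) (g x) (hgK x hxK)
      (by rw [hgnorm x hx0, hφ2]) t htE ?_
    calc g x = (r₂ / ‖x‖) • x := by simp only [g, hφ2]
      _ = (r₂ / ‖x‖) • (c x • t + d x • w) := by rw [← hxt]
      _ = t + (r₂ / ‖x‖ * d x) • w := by
        rw [smul_add, smul_smul, smul_smul, hcv]
        have : r₂ / ‖x‖ * (‖x‖ / r₂) = 1 := by field_simp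
        rw [this, one_smul]
  have hd0 : d x = 0 := max_eq_right (by linarith)
  rw [hd0, zero_smul, add_zero] at hxt
  rcases le_or_gt 2 ‖x‖ with h2 | h2
  · exfalso
    have hφ1 : φ ‖x‖ = r₁ := by
      have : τ ‖x‖ = 1 := by
        simp only [τ]
        rw [min_eq_left (by linarith), max_eq_right zero_le_one]
      simp only [φ, this]; ring
    have hcv : c x = 2 / r₁ := by simp only [c, hφ1, min_eq_right h2]
    refine ha (g x) (hgK x hxK) (by rw [hgnorm x hx0, hφ1]) (‖x‖ / 2) (by linarith) ?_
    have : (‖x‖ / 2) • g x = t := by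
      calc (‖x‖ / 2) • g x = (r₁ / 2) • x := by
            simp only [g, hφ1, smul_smul]
            congr 1
            field_simp
        _ = (r₁ / 2) • (c x • t) := by rw [← hxt]
        _ = t := by
          rw [smul_smul, hcv]
          have : r₁ / 2 * (2 / r₁) = 1 := by field_simp
          rw [this, one_smul]
    rw [this]
    exact htE
  · have hcv : c x = ‖x‖ / φ ‖x‖ := by simp only [c, min_eq_left h2.le]
    have hφp := hφpos ‖x‖
    have hgt : g x = t := by
      calc g x = (φ ‖x‖ / ‖x‖) • (c x • t) := by rw [← hxt]
        _ = t := by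
          rw [smul_smul, hcv]
          have : φ ‖x‖ / ‖x‖ * (‖x‖ / φ ‖x‖) = 1 := by field_simp
          rw [this, one_smul]
    refine ⟨g x, hgK x hxK, (hcond (g x) (hgU x hxK) (by rw [← hgt] at htE; exact htE)).symm, ?_, ?_⟩
    all_goals
      rw [hgnorm x hx0]
      have hτv : τ ‖x‖ = ‖x‖ - 1 := by
        simp only [τ]
        rw [min_eq_right (by linarith), max_eq_right (by linarith)]
      simp only [φ, hτv]
      rcases lt_or_gt_of_ne hne with h | h
    · rw [hm, min_eq_left h.le]; nlinarith
    · rw [hm, min_eq_right h.le]; nlinarith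
    · rw [max_eq_right h.le]; nlinarith
    · rw [max_eq_left h.le]; nlinarith
end

section
/- Let K = ℝ²₊ = {(x,y) ∈ ℝ² : x ≥ 0, y ≥ 0} with the order (x₁,y₁) ⪯ (x₂,y₂) iff x₂ − x₁ ≥ 0 and y₂ − y₁ ≥ 0. Fix 0 < r < R and define T : K → K in polar coordinates (ρ,θ) by: T(ρ,θ) = (0,0) if ρ ≠ r; T(r,θ) = the point with polar coordinates (r, π/2) if θ ∈ [0, π/4); and T(r,θ) = the point with polar coordinates (r, 0) if θ ∈ [π/4, π/2]. Then: (1) for all x ∈ K with ‖x‖ = R and y = Tx, it is not the case that y ⪰ x; (2) for all x ∈ K with ‖x‖ = r and y = Tx, it is not the case that y ⪯ x; yet (3) T has no fixed point in closedBall(0,R) \ ball(0,r). (Hence the compression–expansion hypotheses imposed on T itself, rather than on its closed–convex envelope, do not guarantee a fixed point.) -/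
open Set Metric

/-- The operator of the counterexample, written in cartesian coordinates on the
Euclidean plane: in polar coordinates it maps `(ρ,θ)` with `ρ ≠ r` to the origin,
points `(r,θ)` with `θ ∈ [0,π/4)` (i.e. `x₂ < x₁`) to the point of polar
coordinates `(r,π/2)`, and points `(r,θ)` with `θ ∈ [π/4,π/2]` (i.e. `x₁ ≤ x₂`)
to the point of polar coordinates `(r,0)`. -/
noncomputable def Tpolar (r : ℝ) (x : EuclideanSpace ℝ (Fin 2)) :
    EuclideanSpace ℝ (Fin 2) :=
  if ‖x‖ = r then
    (if x 1 < x 0 then (WithLp.equiv 2 (Fin 2 → ℝ)).symm ![0, r]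
      else (WithLp.equiv 2 (Fin 2 → ℝ)).symm ![r, 0])
  else 0

/-- In the cone `K = ℝ²₊` of the Euclidean plane with the induced order, the map
`Tpolar r` satisfies the compression–expansion conditions (with radii `R` and `r`)
but has no fixed point in `closedBall 0 R \ ball 0 r`. -/
theorem no_fixed_point_example (r R : ℝ) (hr : 0 < r) (hrR : r < R) :
    (∀ x ∈ {y : EuclideanSpace ℝ (Fin 2) | 0 ≤ y 0 ∧ 0 ≤ y 1}, ‖x‖ = R →
      Tpolar r x - x ∉ {y : EuclideanSpace ℝ (Fin 2) | 0 ≤ y 0 ∧ 0 ≤ y 1}) ∧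
    (∀ x ∈ {y : EuclideanSpace ℝ (Fin 2) | 0 ≤ y 0 ∧ 0 ≤ y 1}, ‖x‖ = r →
      x - Tpolar r x ∉ {y : EuclideanSpace ℝ (Fin 2) | 0 ≤ y 0 ∧ 0 ≤ y 1}) ∧
    (∀ x ∈ {y : EuclideanSpace ℝ (Fin 2) | 0 ≤ y 0 ∧ 0 ≤ y 1},
      x ∈ closedBall (0 : EuclideanSpace ℝ (Fin 2)) R \ ball (0 : EuclideanSpace ℝ (Fin 2)) r →
      Tpolar r x ≠ x) := by
  have key : ∀ x : EuclideanSpace ℝ (Fin 2), ‖x‖ ^ 2 = x 0 ^ 2 + x 1 ^ 2 := by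
    intro x
    rw [EuclideanSpace.norm_sq_eq]
    simp [Fin.sum_univ_two]
  refine ⟨?_, ?_, ?_⟩
  · rintro x ⟨h0, h1⟩ hx ⟨g0, g1⟩
    have hk := key x
    have hne : ‖x‖ ≠ r := by rw [hx]; exact hrR.ne'
    simp only [Tpolar, if_neg hne] at g0 g1
    simp at g0 g1
    have e0 : x 0 = 0 := le_antisymm g0 h0
    have e1 : x 1 = 0 := le_antisymm g1 h1
    rw [hx, e0, e1] at hk
    nlinarith
  · rintro x ⟨h0, h1⟩ hx ⟨g0, g1⟩
    have hk := key x
    rw [hx] at hk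
    by_cases hlt : x 1 < x 0
    · simp only [Tpolar, if_pos hx, if_pos hlt] at g0 g1
      simp at g0 g1
      nlinarith
    · simp only [Tpolar, if_pos hx, if_neg hlt] at g0 g1
      simp at g0 g1
      nlinarith
  · rintro x ⟨h0, h1⟩ ⟨_, hb⟩ hT
    have hrx : r ≤ ‖x‖ := by simpa using hb
    by_cases hx : ‖x‖ = r
    · by_cases hlt : x 1 < x 0
      · simp only [Tpolar, if_pos hx, if_pos hlt] at hT
        have e0 : x 0 = 0 := by rw [← hT]; simp
        linarith
      · simp only [Tpolar, if_pos hx, if_neg hlt] at hT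
        have e0 : x 0 = r := by rw [← hT]; simp
        have e1 : x 1 = 0 := by rw [← hT]; simp
        apply hlt
        rw [e0, e1]
        exact hr
    · simp only [Tpolar, if_neg hx] at hT
      rw [← hT, norm_zero] at hrx
      linarith
end

section
/- Assume (H1)–(H4). Then the Hammerstein operator Tu(t) = ∫₀¹ k(t,s) g(s) f(s,u(s)) ds is a well-defined map from the cone K into K, and T maps bounded subsets of K into relatively compact subsets of C([0,1]). -/
open Set Metric MeasureTheory Filter Topology

/-- Extension of a continuous function on `[0,1]` to all of `ℝ`. -/
noncomputable def uext (u : C(Icc (0:ℝ) 1, ℝ)) : ℝ → ℝ :=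
  IccExtend zero_le_one ⇑u

/-- Value of the Hammerstein operator: `Tu(t) = ∫₀¹ k(t,s) g(s) f(s,u(s)) ds`. -/
noncomputable def hamVal (k : ℝ → ℝ → ℝ) (g : ℝ → ℝ) (f : ℝ → ℝ → ℝ)
    (u : C(Icc (0:ℝ) 1, ℝ)) (t : ℝ) : ℝ :=
  ∫ s in Icc (0:ℝ) 1, k t s * g s * f s (uext u s)

/-- The cone `K = {u ∈ C([0,1]) : u ≥ 0, min_{t ∈ [a,b]} u(t) ≥ c‖u‖}`. -/
def coneK (a b c : ℝ) : Set C(Icc (0:ℝ) 1, ℝ) :=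
  {u | (∀ t, 0 ≤ u t) ∧ ∀ t : Icc (0:ℝ) 1, (t:ℝ) ∈ Icc a b → c * ‖u‖ ≤ u t}

theorem hamaux_arzela (A : Set C(Icc (0:ℝ) 1, ℝ)) (M : ℝ)
    (hM : ∀ v ∈ A, ∀ t, |v t| ≤ M)
    (hE : ∀ t₀ : Icc (0:ℝ) 1, ∃ m : Icc (0:ℝ) 1 → ℝ, Tendsto m (𝓝 t₀) (𝓝 0) ∧
      ∀ v ∈ A, ∀ t, dist (v t₀) (v t) ≤ m t) : IsCompact (closure A) := by
  let e := (ContinuousMap.isometryEquivBoundedOfCompact (Icc (0:ℝ) 1) ℝ)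
  have h1 : IsCompact (closure (e '' A)) := by
    refine BoundedContinuousFunction.arzela_ascoli (Icc (-M) M) isCompact_Icc _ ?_ ?_
    · rintro _ x ⟨v, hv, rfl⟩
      exact abs_le.1 (hM v hv x)
    · intro t₀
      obtain ⟨m, hm, hA⟩ := hE t₀
      refine Metric.equicontinuousAt_of_continuity_modulus m hm _ (Eventually.of_forall ?_)
      rintro t ⟨_, v, hv, rfl⟩
      exact hA v hv t
  have h2 : closure (e '' A) = e '' closure A := (e.toHomeomorph.image_closure A).symm
  rw [h2] at h1
  exact (e.toHomeomorph.isCompact_image).1 h1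

theorem hamaux_uext_mem {a b c r : ℝ} {u : C(Icc (0:ℝ) 1, ℝ)} (hu : u ∈ coneK a b c)
    (hr : ‖u‖ ≤ r) (s : ℝ) : uext u s ∈ Icc 0 r := by
  refine ⟨hu.1 _, ?_⟩
  exact ((le_abs_self _).trans (u.norm_coe_le_norm _)).trans hr

/-- Under (H1)–(H4), the Hammerstein operator `Tu(t) = ∫₀¹ k(t,s)g(s)f(s,u(s)) ds`
is a well-defined map from `K` into `K`, and it maps bounded subsets of `K` into
relatively compact subsets of `C([0,1])`. -/
theorem hammerstein_well_defined_and_compact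
    (a b c : ℝ) (ha0 : 0 ≤ a) (hab : a ≤ b) (hb1 : b ≤ 1) (hc0 : 0 < c) (hc1 : c ≤ 1)
    (f : ℝ → ℝ → ℝ) (g : ℝ → ℝ) (k : ℝ → ℝ → ℝ)
    -- (H1)
    (hf_nonneg : ∀ t ∈ Icc (0:ℝ) 1, ∀ v, 0 ≤ v → 0 ≤ f t v)
    (hf_meas : ∀ v : ℝ → ℝ, Continuous v → Measurable fun t => f t (v t))
    (hf_bdd : ∀ r > (0:ℝ), ∃ R > (0:ℝ),
      ∀ᵐ t ∂(volume.restrict (Icc (0:ℝ) 1)), ∀ v ∈ Icc (0:ℝ) r, f t v ≤ R)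
    -- (H2)
    (hg_meas : Measurable g)
    (hg_nonneg : ∀ᵐ s ∂(volume.restrict (Icc (0:ℝ) 1)), 0 ≤ g s)
    -- (H3)
    (hk_cont : ContinuousOn (fun p : ℝ × ℝ => k p.1 p.2) (Icc 0 1 ×ˢ Icc 0 1))
    (hk_nonneg : ∀ t ∈ Icc (0:ℝ) 1, ∀ s ∈ Icc (0:ℝ) 1, 0 ≤ k t s)
    -- (H4)
    (Φ : ℝ → ℝ) (hΦ_meas : Measurable Φ) (hΦ_nonneg : ∀ s ∈ Icc (0:ℝ) 1, 0 ≤ Φ s)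
    (hΦg_int : IntegrableOn (fun s => Φ s * g s) (Icc (0:ℝ) 1))
    (hΦg_pos : 0 < ∫ s in Icc a b, Φ s * g s)
    (hkΦ : ∀ t ∈ Icc (0:ℝ) 1, ∀ s ∈ Icc (0:ℝ) 1, k t s ≤ Φ s)
    (hckΦ : ∀ t ∈ Icc a b, ∀ s ∈ Icc (0:ℝ) 1, c * Φ s ≤ k t s) :
    ∃ T : C(Icc (0:ℝ) 1, ℝ) → C(Icc (0:ℝ) 1, ℝ),
      (∀ u ∈ coneK a b c, ∀ t : Icc (0:ℝ) 1, T u t = hamVal k g f u t) ∧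
      MapsTo T (coneK a b c) (coneK a b c) ∧
      (∀ B ⊆ coneK a b c, Bornology.IsBounded B → IsCompact (closure (T '' B))) := by
  classical
  have hsm : MeasurableSet (Icc (0:ℝ) 1) := measurableSet_Icc
  have hmemI : ∀ᵐ s ∂(volume.restrict (Icc (0:ℝ) 1)), s ∈ Icc (0:ℝ) 1 := ae_restrict_mem hsm
  have hFmeas : ∀ u : C(Icc (0:ℝ) 1, ℝ), Measurable fun s => f s (uext u s) := fun u =>
    hf_meas _ (u.continuous.Icc_extend')
  have hkmeas : ∀ t ∈ Icc (0:ℝ) 1,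
      AEStronglyMeasurable (fun s => k t s) (volume.restrict (Icc (0:ℝ) 1)) := by
    intro t ht
    have : ContinuousOn (fun s => k t s) (Icc (0:ℝ) 1) :=
      hk_cont.comp (f := fun s : ℝ => (t, s)) (by fun_prop) (fun s hs => ⟨ht, hs⟩)
    exact this.aestronglyMeasurable hsm
  -- uniform bound on `f`
  have hFb : ∀ r > (0:ℝ), ∃ R > (0:ℝ), ∀ u ∈ coneK a b c, ‖u‖ ≤ r →
      ∀ᵐ s ∂(volume.restrict (Icc (0:ℝ) 1)),
        0 ≤ f s (uext u s) ∧ f s (uext u s) ≤ R := by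
    intro r hr
    obtain ⟨R, hR, hb⟩ := hf_bdd r hr
    refine ⟨R, hR, fun u hu hur => ?_⟩
    filter_upwards [hb, hmemI] with s hs hsI
    have := hamaux_uext_mem hu hur s
    exact ⟨hf_nonneg s hsI _ this.1, hs _ this⟩
  -- integrability
  have hint : ∀ u ∈ coneK a b c, ∀ h : ℝ → ℝ,
      AEStronglyMeasurable h (volume.restrict (Icc (0:ℝ) 1)) →
      (∀ s ∈ Icc (0:ℝ) 1, |h s| ≤ Φ s) →
      Integrable (fun s => h s * g s * f s (uext u s)) (volume.restrict (Icc (0:ℝ) 1)) := by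
    intro u hu h hh hhΦ
    obtain ⟨R, hR, hb⟩ := hFb (‖u‖ + 1) (by positivity)
    refine (hΦg_int.mul_const R).mono'
      ((hh.mul hg_meas.aestronglyMeasurable).mul (hFmeas u).aestronglyMeasurable) ?_
    filter_upwards [hb u hu (by linarith), hmemI, hg_nonneg] with s hs hsI hgs
    rw [Real.norm_eq_abs, abs_mul, abs_mul, abs_of_nonneg hgs, abs_of_nonneg hs.1]
    have := hhΦ s hsI
    have := hΦ_nonneg s hsI
    exact mul_le_mul (mul_le_mul_of_nonneg_right (hhΦ s hsI) hgs) hs.2 hs.1 (by positivity)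
  have hkabs : ∀ t ∈ Icc (0:ℝ) 1, ∀ s ∈ Icc (0:ℝ) 1, |k t s| ≤ Φ s := fun t ht s hs => by
    rw [abs_of_nonneg (hk_nonneg t ht s hs)]; exact hkΦ t ht s hs
  have hintk : ∀ u ∈ coneK a b c, ∀ t ∈ Icc (0:ℝ) 1,
      Integrable (fun s => k t s * g s * f s (uext u s)) (volume.restrict (Icc (0:ℝ) 1)) :=
    fun u hu t ht => hint u hu _ (hkmeas t ht) (hkabs t ht)
  have hintΦ : ∀ u ∈ coneK a b c,
      Integrable (fun s => Φ s * g s * f s (uext u s)) (volume.restrict (Icc (0:ℝ) 1)) :=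
    fun u hu => hint u hu _ hΦ_meas.aestronglyMeasurable
      (fun s hs => (abs_of_nonneg (hΦ_nonneg s hs)).le)
  -- modulus of continuity
  let D : ℝ → ℝ → ℝ := fun t₀ t => ∫ s in Icc (0:ℝ) 1, |k t₀ s - k t s| * g s
  have hDb : ∀ t₀ ∈ Icc (0:ℝ) 1, ∀ t ∈ Icc (0:ℝ) 1,
      ∀ᵐ s ∂(volume.restrict (Icc (0:ℝ) 1)), ‖|k t₀ s - k t s| * g s‖ ≤ Φ s * g s := by
    intro t₀ ht₀ t ht
    filter_upwards [hmemI, hg_nonneg] with s hs hgs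
    rw [Real.norm_eq_abs, abs_mul, abs_abs, abs_of_nonneg hgs]
    refine mul_le_mul_of_nonneg_right ?_ hgs
    have h1 := hk_nonneg t ht s hs
    have h2 := hk_nonneg t₀ ht₀ s hs
    have h3 := hkΦ t ht s hs
    have h4 := hkΦ t₀ ht₀ s hs
    rw [abs_le]; constructor <;> linarith
  have hDm : ∀ t₀ ∈ Icc (0:ℝ) 1, ∀ t ∈ Icc (0:ℝ) 1,
      AEStronglyMeasurable (fun s => |k t₀ s - k t s| * g s) (volume.restrict (Icc (0:ℝ) 1)) := by
    intro t₀ ht₀ t ht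
    exact (((hkmeas t₀ ht₀).sub (hkmeas t ht)).norm).mul hg_meas.aestronglyMeasurable
  have hDint : ∀ t₀ ∈ Icc (0:ℝ) 1, ∀ t ∈ Icc (0:ℝ) 1,
      Integrable (fun s => |k t₀ s - k t s| * g s) (volume.restrict (Icc (0:ℝ) 1)) :=
    fun t₀ ht₀ t ht => Integrable.mono' hΦg_int (hDm t₀ ht₀ t ht) (hDb t₀ ht₀ t ht)
  have hDlim : ∀ t₀ : Icc (0:ℝ) 1,
      Tendsto (fun t : Icc (0:ℝ) 1 => D t₀ t) (𝓝 t₀) (𝓝 0) := by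
    intro t₀
    have : Tendsto (fun t : Icc (0:ℝ) 1 => D t₀ t) (𝓝 t₀)
        (𝓝 (∫ s in Icc (0:ℝ) 1, (0:ℝ))) := by
      refine tendsto_integral_filter_of_dominated_convergence (fun s => Φ s * g s)
        (Eventually.of_forall fun t => hDm _ t₀.2 _ t.2)
        (Eventually.of_forall fun t => hDb _ t₀.2 _ t.2) hΦg_int ?_
      filter_upwards [hmemI] with s hs
      have hc : Continuous (fun t : Icc (0:ℝ) 1 => |k t₀ s - k t s| * g s) := by
        have : Continuous (fun t : Icc (0:ℝ) 1 => k t s) :=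
          hk_cont.comp_continuous (f := fun t : Icc (0:ℝ) 1 => ((t:ℝ), s)) (by fun_prop)
            (fun t => ⟨t.2, hs⟩)
        exact ((continuous_const.sub this).abs).mul continuous_const
      have := hc.tendsto t₀
      simpa using this
    simpa using this
  have hmod : ∀ u ∈ coneK a b c, ∀ R : ℝ,
      (∀ᵐ s ∂(volume.restrict (Icc (0:ℝ) 1)),
        0 ≤ f s (uext u s) ∧ f s (uext u s) ≤ R) →
      ∀ t₀ t : Icc (0:ℝ) 1, dist (hamVal k g f u t₀) (hamVal k g f u t) ≤ D t₀ t * R := by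
    intro u hu R hb t₀ t
    unfold hamVal
    rw [Real.dist_eq, ← integral_sub (hintk u hu _ t₀.2) (hintk u hu _ t.2), ← integral_mul_const,
      ← Real.norm_eq_abs]
    refine norm_integral_le_of_norm_le ((hDint _ t₀.2 _ t.2).mul_const R) ?_
    filter_upwards [hb, hg_nonneg] with s hs hgs
    rw [← sub_mul, ← sub_mul, Real.norm_eq_abs, abs_mul, abs_mul, abs_of_nonneg hgs,
      abs_of_nonneg hs.1]
    exact mul_le_mul_of_nonneg_left hs.2 (by positivity)
  have hcont : ∀ u ∈ coneK a b c, Continuous fun t : Icc (0:ℝ) 1 => hamVal k g f u t := by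
    intro u hu
    obtain ⟨R, hR, hb⟩ := hFb (‖u‖ + 1) (by positivity)
    rw [continuous_iff_continuousAt]
    intro t₀
    have hl : Tendsto (fun t : Icc (0:ℝ) 1 => D t₀ t * R) (𝓝 t₀) (𝓝 0) := by
      simpa using (hDlim t₀).mul_const R
    refine tendsto_iff_dist_tendsto_zero.2 (squeeze_zero (fun _ => dist_nonneg) (fun t => ?_) hl)
    rw [dist_comm]
    exact hmod u hu R (hb u hu (by linarith)) t₀ t
  -- values
  have hnn : ∀ u ∈ coneK a b c, ∀ t : Icc (0:ℝ) 1, 0 ≤ hamVal k g f u t := by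
    intro u hu t
    obtain ⟨R, hR, hb⟩ := hFb (‖u‖ + 1) (by positivity)
    refine integral_nonneg_of_ae ?_
    filter_upwards [hb u hu (by linarith), hg_nonneg, hmemI] with s hs hgs hsI
    exact mul_nonneg (mul_nonneg (hk_nonneg _ t.2 _ hsI) hgs) hs.1
  have hup : ∀ u ∈ coneK a b c, ∀ t : Icc (0:ℝ) 1,
      hamVal k g f u t ≤ ∫ s in Icc (0:ℝ) 1, Φ s * g s * f s (uext u s) := by
    intro u hu t
    obtain ⟨R, hR, hb⟩ := hFb (‖u‖ + 1) (by positivity)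
    refine integral_mono_ae (hintk u hu _ t.2) (hintΦ u hu) ?_
    filter_upwards [hb u hu (by linarith), hg_nonneg, hmemI] with s hs hgs hsI
    exact mul_le_mul_of_nonneg_right (mul_le_mul_of_nonneg_right (hkΦ _ t.2 _ hsI) hgs) hs.1
  have hlow : ∀ u ∈ coneK a b c, ∀ t : Icc (0:ℝ) 1, (t:ℝ) ∈ Icc a b →
      c * (∫ s in Icc (0:ℝ) 1, Φ s * g s * f s (uext u s)) ≤ hamVal k g f u t := by
    intro u hu t htab
    obtain ⟨R, hR, hb⟩ := hFb (‖u‖ + 1) (by positivity)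
    rw [← integral_const_mul]
    refine integral_mono_ae ((hintΦ u hu).const_mul c) (hintk u hu _ t.2) ?_
    filter_upwards [hb u hu (by linarith), hg_nonneg, hmemI] with s hs hgs hsI
    have := mul_le_mul_of_nonneg_right
      (mul_le_mul_of_nonneg_right (hckΦ _ htab _ hsI) hgs) hs.1
    simpa only [mul_assoc] using this
  let T : C(Icc (0:ℝ) 1, ℝ) → C(Icc (0:ℝ) 1, ℝ) := fun u =>
    if h : Continuous (fun t : Icc (0:ℝ) 1 => hamVal k g f u t) then ⟨_, h⟩ else 0
  have hT : ∀ u ∈ coneK a b c, ∀ t : Icc (0:ℝ) 1, T u t = hamVal k g f u t := by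
    intro u hu t
    simp only [T, dif_pos (hcont u hu), ContinuousMap.coe_mk]
  refine ⟨T, hT, ?_, ?_⟩
  · intro u hu
    refine ⟨fun t => by rw [hT u hu]; exact hnn u hu t, fun t ht => ?_⟩
    rw [hT u hu]
    refine le_trans (mul_le_mul_of_nonneg_left ?_ hc0.le) (hlow u hu t ht)
    refine (ContinuousMap.norm_le _ ((hnn u hu t).trans (hup u hu t))).2 fun τ => ?_
    rw [hT u hu, Real.norm_eq_abs, abs_of_nonneg (hnn u hu τ)]
    exact hup u hu τ
  · intro B hB hBb
    obtain ⟨r, hr, hBr⟩ := hBb.exists_pos_norm_le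
    obtain ⟨R, hR, hb⟩ := hFb r hr
    refine hamaux_arzela _ ((∫ s in Icc (0:ℝ) 1, Φ s * g s) * R) ?_ ?_
    · rintro _ ⟨u, hu, rfl⟩ t
      have huK := hB hu
      rw [hT u huK, abs_of_nonneg (hnn u huK t)]
      refine (hup u huK t).trans ?_
      rw [← integral_mul_const]
      refine integral_mono_ae (hintΦ u huK) (hΦg_int.mul_const R) ?_
      filter_upwards [hb u huK (hBr u hu), hg_nonneg, hmemI] with s hs hgs hsI
      exact mul_le_mul_of_nonneg_left hs.2 (mul_nonneg (hΦ_nonneg s hsI) hgs)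
    · intro t₀
      refine ⟨fun t => D t₀ t * R, by simpa using (hDlim t₀).mul_const R, ?_⟩
      rintro _ ⟨u, hu, rfl⟩ t
      rw [hT u (hB hu), hT u (hB hu)]
      exact hmod u (hB hu) R (hb u (hB hu) (hBr u hu)) t₀ t
end

section
/- Assume (H1)–(H4) and that the Hammerstein operator T satisfies {u} ∩ 𝕋u ⊆ {Tu} for all u ∈ K ∩ 𝕋K, where 𝕋 is the closed–convex envelope of T. Suppose condition (I⁰_ρ): there exist ρ > 0 and ε > 0 such that f_{ρ,ε} > M(a,b), where f_{ρ,ε} = inf{ f(t,u)/ρ : a ≤ t ≤ b, c(ρ−ε) ≤ u ≤ ρ/c + ε } and 1/M(a,b) = inf_{t∈[a,b]} ∫ₐᵇ k(t,s)g(s) ds. Let V_ρ = {u ∈ K : min_{a≤t≤b} u(t) < ρ} and let e be the constant function e(t) ≡ 1. Then u ∉ 𝕋u + λe for all u in the relative boundary of V_ρ in K and all λ ≥ 0. -/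
open Set Metric MeasureTheory Filter Topology

/-- The relatively open set `V_ρ = {u ∈ K : min_{a ≤ t ≤ b} u(t) < ρ}`. -/
def Vrho (a b c ρ : ℝ) : Set C(Icc (0:ℝ) 1, ℝ) :=
  {u ∈ coneK a b c | ∃ t : Icc (0:ℝ) 1, (t:ℝ) ∈ Icc a b ∧ u t < ρ}

/-- Under (H1)–(H4), condition `{u} ∩ 𝕋u ⊆ {Tu}` on `K ∩ 𝕋K` and condition `(I⁰_ρ)`
(`f_{ρ,ε} > M(a,b)` where `1/M(a,b) = inf_{t∈[a,b]} ∫ₐᵇ k(t,s)g(s) ds`), one has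
`u ∉ 𝕋u + λe` for every `u` in the relative boundary of `V_ρ` in `K` and every
`λ ≥ 0`, where `e ≡ 1`. -/
theorem hammerstein_index_condition_zero
    (a b c : ℝ) (ha0 : 0 ≤ a) (hab : a ≤ b) (hb1 : b ≤ 1) (hc0 : 0 < c) (hc1 : c ≤ 1)
    (f : ℝ → ℝ → ℝ) (g : ℝ → ℝ) (k : ℝ → ℝ → ℝ)
    -- (H1)
    (hf_nonneg : ∀ t ∈ Icc (0:ℝ) 1, ∀ v, 0 ≤ v → 0 ≤ f t v)
    (hf_meas : ∀ v : ℝ → ℝ, Continuous v → Measurable fun t => f t (v t))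
    (hf_bdd : ∀ r > (0:ℝ), ∃ R > (0:ℝ),
      ∀ᵐ t ∂(volume.restrict (Icc (0:ℝ) 1)), ∀ v ∈ Icc (0:ℝ) r, f t v ≤ R)
    -- (H2)
    (hg_meas : Measurable g)
    (hg_nonneg : ∀ᵐ s ∂(volume.restrict (Icc (0:ℝ) 1)), 0 ≤ g s)
    -- (H3)
    (hk_cont : ContinuousOn (fun p : ℝ × ℝ => k p.1 p.2) (Icc 0 1 ×ˢ Icc 0 1))
    (hk_nonneg : ∀ t ∈ Icc (0:ℝ) 1, ∀ s ∈ Icc (0:ℝ) 1, 0 ≤ k t s)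
    -- (H4)
    (Φ : ℝ → ℝ) (hΦ_meas : Measurable Φ) (hΦ_nonneg : ∀ s ∈ Icc (0:ℝ) 1, 0 ≤ Φ s)
    (hΦg_int : IntegrableOn (fun s => Φ s * g s) (Icc (0:ℝ) 1))
    (hΦg_pos : 0 < ∫ s in Icc a b, Φ s * g s)
    (hkΦ : ∀ t ∈ Icc (0:ℝ) 1, ∀ s ∈ Icc (0:ℝ) 1, k t s ≤ Φ s)
    (hckΦ : ∀ t ∈ Icc a b, ∀ s ∈ Icc (0:ℝ) 1, c * Φ s ≤ k t s)
    -- the Hammerstein operator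
    (T : C(Icc (0:ℝ) 1, ℝ) → C(Icc (0:ℝ) 1, ℝ))
    (hT : ∀ u ∈ coneK a b c, ∀ t : Icc (0:ℝ) 1, T u t = hamVal k g f u t)
    -- `{u} ∩ 𝕋u ⊆ {Tu}` for all `u ∈ K ∩ 𝕋K`
    (hcond : ∀ u ∈ coneK a b c ∩ (⋃ v ∈ coneK a b c, ccEnvelope (coneK a b c) T v),
      u ∈ ccEnvelope (coneK a b c) T u → u = T u)
    -- condition (I⁰_ρ)
    (ρ ε : ℝ) (hρ : 0 < ρ) (hε : 0 < ε)
    (hM_pos : 0 < ⨅ t : Icc a b, ∫ s in Icc a b, k t s * g s)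
    (hI0 : (⨅ t : Icc a b, ∫ s in Icc a b, k t s * g s)⁻¹ <
      sInf {y : ℝ | ∃ t ∈ Icc a b, ∃ v ∈ Icc (c * (ρ - ε)) (ρ / c + ε), y = f t v / ρ}) :
    ∀ u ∈ closure (Vrho a b c ρ) ∩ closure (coneK a b c \ Vrho a b c ρ),
      ∀ l : ℝ, 0 ≤ l → ∀ y ∈ ccEnvelope (coneK a b c) T u,
        u ≠ y + l • (1 : C(Icc (0:ℝ) 1, ℝ)) := by
  rintro u ⟨huV, huW⟩ l hl y hy huy
  set N := ⨅ t : Icc a b, ∫ s in Icc a b, k t s * g s with hN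
  set S := {y : ℝ | ∃ t ∈ Icc a b, ∃ v ∈ Icc (c * (ρ - ε)) (ρ / c + ε), y = f t v / ρ} with hS
  set m := sInf S with hm
  have hsub : Icc a b ⊆ Icc (0:ℝ) 1 := Icc_subset_Icc ha0 hb1
  have hNi : 0 < N⁻¹ := inv_pos.mpr hM_pos
  have hm0 : 0 < m := hNi.trans hI0
  have hmN : 1 < m * N := by
    have := mul_lt_mul_of_pos_right hI0 hM_pos
    rwa [inv_mul_cancel₀ hM_pos.ne'] at this
  have hSb : BddBelow S := by
    by_contra h
    rw [hm, Real.sInf_of_not_bddBelow h] at hm0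
    exact lt_irrefl _ hm0
  have hfm : ∀ t ∈ Icc a b, ∀ v ∈ Icc (c * (ρ - ε)) (ρ / c + ε), ρ * m ≤ f t v := by
    intro t ht v hv
    have h1 : m ≤ f t v / ρ := csInf_le hSb ⟨t, ht, v, hv, rfl⟩
    rw [le_div_iff₀ hρ] at h1
    linarith
  -- facts about `u`
  have happ : ∀ (v w : C(Icc (0:ℝ) 1, ℝ)) t, |v t - w t| ≤ dist v w := fun v w t => by
    have := ContinuousMap.dist_apply_le_dist (f := v) (g := w) t
    rwa [Real.dist_eq] at this
  have hlow : ∀ t : Icc (0:ℝ) 1, (t:ℝ) ∈ Icc a b → ρ ≤ u t := by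
    intro t ht
    by_contra! h
    obtain ⟨v, hv, hd⟩ := Metric.mem_closure_iff.1 huW (ρ - u t) (by linarith)
    have h1 := abs_le.1 (happ u v t)
    exact hv.2 ⟨hv.1, t, ht, by linarith⟩
  have hex : ∀ δ > 0, ∃ t : Icc (0:ℝ) 1, (t:ℝ) ∈ Icc a b ∧ u t < ρ + δ := by
    intro δ hδ
    obtain ⟨v, hv, hd⟩ := Metric.mem_closure_iff.1 huV δ hδ
    obtain ⟨t, ht, hvt⟩ := hv.2
    have h1 := abs_le.1 (happ u v t)
    exact ⟨t, ht, by linarith⟩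
  have hnorm : c * ‖u‖ ≤ ρ := by
    refine le_of_forall_pos_le_add fun δ hδ => ?_
    obtain ⟨v, hv, hd⟩ := Metric.mem_closure_iff.1 huV (δ) hδ
    obtain ⟨t, ht, hvt⟩ := hv.2
    have h1 := hv.1.2 t ht
    have h2 : ‖u‖ ≤ ‖v‖ + δ := by
      have := norm_sub_norm_le u v
      rw [← dist_eq_norm] at this
      linarith
    nlinarith
  have hup : ∀ t, u t ≤ ρ / c := by
    intro t
    rw [le_div_iff₀ hc0]
    have := (le_abs_self (u t)).trans (u.norm_coe_le_norm t)
    nlinarith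
  -- integrability
  have hk_meas : ∀ t ∈ Icc (0:ℝ) 1,
      AEStronglyMeasurable (fun s => k t s) (volume.restrict (Icc (0:ℝ) 1)) := by
    intro t ht
    refine ContinuousOn.aestronglyMeasurable ?_ measurableSet_Icc
    exact hk_cont.comp (f := fun s => (t, s)) (by fun_prop) (fun s hs => ⟨ht, hs⟩)
  have hmemI : ∀ᵐ s ∂(volume.restrict (Icc (0:ℝ) 1)), s ∈ Icc (0:ℝ) 1 :=
    ae_restrict_mem measurableSet_Icc
  have hkg_int : ∀ t ∈ Icc (0:ℝ) 1, IntegrableOn (fun s => k t s * g s) (Icc (0:ℝ) 1) := by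
    intro t ht
    refine Integrable.mono' hΦg_int ((hk_meas t ht).mul hg_meas.aestronglyMeasurable) ?_
    filter_upwards [hmemI, hg_nonneg] with s hs hg
    rw [Real.norm_of_nonneg (mul_nonneg (hk_nonneg t ht s hs) hg)]
    exact mul_le_mul_of_nonneg_right (hkΦ t ht s hs) hg
  have hres : volume.restrict (Icc a b) ≤ volume.restrict (Icc (0:ℝ) 1) :=
    Measure.restrict_mono hsub le_rfl
  have hNle : ∀ t ∈ Icc a b, N ≤ ∫ s in Icc a b, k t s * g s := by
    intro t ht
    refine ciInf_le (f := fun t : Icc a b => ∫ s in Icc a b, k t s * g s) ⟨0, ?_⟩ ⟨t, ht⟩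
    rintro _ ⟨x, rfl⟩
    refine integral_nonneg_of_ae ?_
    filter_upwards [ae_mono hres hmemI, ae_mono hres hg_nonneg] with s hs hg
    exact mul_nonneg (hk_nonneg x (hsub x.2) s hs) hg
  -- main estimate
  have hTv : ∀ v ∈ closedBall u (c * ε) ∩ coneK a b c, ∀ t : Icc (0:ℝ) 1, (t:ℝ) ∈ Icc a b →
      ρ * (m * N) ≤ T v t := by
    rintro v ⟨hvb, hvK⟩ t ht
    rw [hT v hvK t]
    unfold hamVal
    have hcont : Continuous (uext v) := v.continuous.Icc_extend'
    have hv0 : ∀ s, 0 ≤ uext v s := fun s => hvK.1 _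
    have hvle : ∀ s, uext v s ≤ ‖v‖ + 1 := fun s => by
      have h1 := (le_abs_self (uext v s)).trans (v.norm_coe_le_norm (projIcc 0 1 zero_le_one s))
      linarith
    obtain ⟨R, hR, hfR⟩ := hf_bdd (‖v‖ + 1) (by positivity)
    have hint : IntegrableOn (fun s => k t s * g s * f s (uext v s)) (Icc (0:ℝ) 1) := by
      refine Integrable.mul_bdd (c := R) (hkg_int t t.2)
        (hf_meas _ hcont).aestronglyMeasurable ?_
      filter_upwards [hmemI, hfR] with s hs hf
      rw [Real.norm_of_nonneg (hf_nonneg s hs _ (hv0 s))]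
      exact hf _ ⟨hv0 s, hvle s⟩
    have h1 : ∫ s in Icc a b, k t s * g s * f s (uext v s) ≤
        ∫ s in Icc (0:ℝ) 1, k t s * g s * f s (uext v s) := by
      refine integral_mono_measure hres ?_ hint
      filter_upwards [hmemI, hg_nonneg] with s hs hg
      exact mul_nonneg (mul_nonneg (hk_nonneg t t.2 s hs) hg) (hf_nonneg s hs _ (hv0 s))
    have h2 : ∫ s in Icc a b, k t s * g s * (ρ * m) ≤
        ∫ s in Icc a b, k t s * g s * f s (uext v s) := by
      refine integral_mono_ae (((hkg_int t t.2).mono_set hsub).mul_const _)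
        (hint.mono_set hsub) ?_
      filter_upwards [ae_restrict_mem measurableSet_Icc, ae_mono hres hg_nonneg] with s hs hg
      refine mul_le_mul_of_nonneg_left (hfm s hs _ ?_)
        (mul_nonneg (hk_nonneg t t.2 s (hsub hs)) hg)
      have he : uext v s = v ⟨s, hsub hs⟩ := IccExtend_of_mem _ _ _
      rw [he]
      have h3 := abs_le.1 ((happ v u ⟨s, hsub hs⟩).trans hvb)
      have h4 := hlow ⟨s, hsub hs⟩ hs
      have h5 := hup ⟨s, hsub hs⟩
      constructor <;> nlinarith
    rw [integral_mul_const] at h2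
    have h3 := hNle t ht
    have h4 := mul_le_mul_of_nonneg_right h3 (mul_pos hρ hm0).le
    linarith
  have hcl : ∀ t : Icc (0:ℝ) 1, (t:ℝ) ∈ Icc a b → ρ * (m * N) ≤ y t := by
    intro t ht
    have hy1 : y ∈ closure (convexHull ℝ (T '' (closedBall u (c * ε) ∩ coneK a b c))) :=
      mem_iInter₂.1 hy (c * ε) (by positivity)
    have hclosed : IsClosed {w : C(Icc (0:ℝ) 1, ℝ) | ρ * (m * N) ≤ w t} :=
      isClosed_le continuous_const (by fun_prop)
    have hconv : Convex ℝ {w : C(Icc (0:ℝ) 1, ℝ) | ρ * (m * N) ≤ w t} := by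
      intro w hw z hz p q hp hq hpq
      simp only [mem_ofPred_eq, ContinuousMap.add_apply, ContinuousMap.smul_apply,
        smul_eq_mul] at *
      have e1 := mul_le_mul_of_nonneg_left hw hp
      have e2 := mul_le_mul_of_nonneg_left hz hq
      calc ρ * (m * N) = p * (ρ * (m * N)) + q * (ρ * (m * N)) := by
            rw [← add_mul, hpq, one_mul]
        _ ≤ _ := add_le_add e1 e2
    refine closure_minimal (convexHull_min ?_ hconv) hclosed hy1
    rintro _ ⟨v, hv, rfl⟩
    exact hTv v hv t ht
  obtain ⟨t, ht, hut⟩ := hex (ρ * (m * N) - ρ) (by nlinarith)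
  have h1 := hcl t ht
  have h2 : u t = y t + l := by
    conv_lhs => rw [huy]
    simp
  linarith
end

section
/- Let a, b ∈ ℝ with a < b, and let g, h ∈ L¹(a,b) with g ≥ 0 a.e. and h > 0 a.e. in (a,b). For every measurable set J ⊆ (a,b) with m(J) > 0 there is a measurable set J₀ ⊆ J with m(J \ J₀) = 0 such that for every τ₀ ∈ J₀: lim_{t→τ₀⁺} ( ∫_{[τ₀,t]\J} g(s) ds ) / ( ∫_{τ₀}^{t} h(s) ds ) = 0 and lim_{t→τ₀⁻} ( ∫_{[t,τ₀]\J} g(s) ds ) / ( ∫_{t}^{τ₀} h(s) ds ) = 0. -/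
open Set MeasureTheory Filter Topology

lemma quotient_aux (a b : ℝ) (g h : ℝ → ℝ) (J : Set ℝ) (hJ_meas : MeasurableSet J)
    (x : ℝ) (u v : ℝ → ℝ) (l : Filter ℝ) (F : Filter (Set ℝ))
    (hF : Tendsto (fun t => Icc (u t) (v t)) l F)
    (huv : ∀ᶠ t in l, u t < v t ∧ Icc (u t) (v t) ⊆ Ioo a b)
    (hG : Tendsto (fun A => ⨍ y in A, (Ioo a b \ J).indicator g y) F (𝓝 0))
    (hH : Tendsto (fun A => ⨍ y in A, (Ioo a b).indicator h y) F (𝓝 (h x)))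
    (hx : 0 < h x) :
    Tendsto (fun t => (∫ s in Icc (u t) (v t) \ J, g s) / ∫ s in Icc (u t) (v t), h s)
      l (𝓝 0) := by
  have key := (hG.comp hF).div (hH.comp hF) hx.ne'
  rw [zero_div] at key
  refine key.congr' ?_
  filter_upwards [huv] with t ht
  obtain ⟨h1, h2⟩ := ht
  have hm : MeasurableSet (Ioo a b \ J) := measurableSet_Ioo.diff hJ_meas
  have e1 : Icc (u t) (v t) ∩ (Ioo a b \ J) = Icc (u t) (v t) \ J := by
    ext y
    constructor
    · rintro ⟨p, q, r⟩
      exact ⟨p, r⟩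
    · rintro ⟨p, r⟩
      exact ⟨p, h2 p, r⟩
  have e2 : Icc (u t) (v t) ∩ Ioo a b = Icc (u t) (v t) := inter_eq_left.2 h2
  have hv : (volume.real (Icc (u t) (v t)))⁻¹ ≠ 0 := by
    rw [Real.volume_real_Icc_of_le h1.le]
    exact inv_ne_zero (sub_pos.2 h1).ne'
  simp only [Function.comp_apply, Pi.div_apply, setAverage_eq, smul_eq_mul]
  rw [setIntegral_indicator hm, setIntegral_indicator measurableSet_Ioo, e1, e2,
    mul_div_mul_left _ _ hv]

/-- Lemma 4.1 of López Pouso: for `g, h ∈ L¹(a,b)` with `g ≥ 0` a.e. and `h > 0` a.e.,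
and any measurable `J ⊆ (a,b)` of positive measure, almost every point `τ₀ ∈ J`
satisfies `∫_{[τ₀,t]∖J} g / ∫_{τ₀}^{t} h → 0` as `t → τ₀⁺`, and symmetrically from
the left. -/
theorem density_quotient_tendsto_zero
    (a b : ℝ) (hab : a < b) (g h : ℝ → ℝ)
    (hg_int : IntegrableOn g (Ioo a b)) (hh_int : IntegrableOn h (Ioo a b))
    (hg_nonneg : ∀ᵐ s ∂(volume.restrict (Ioo a b)), 0 ≤ g s)
    (hh_pos : ∀ᵐ s ∂(volume.restrict (Ioo a b)), 0 < h s)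
    (J : Set ℝ) (hJ_meas : MeasurableSet J) (hJ_sub : J ⊆ Ioo a b)
    (hJ_pos : 0 < volume J) :
    ∃ J₀ ⊆ J, MeasurableSet J₀ ∧ volume (J \ J₀) = 0 ∧
      ∀ τ₀ ∈ J₀,
        Tendsto (fun t => (∫ s in Icc τ₀ t \ J, g s) / ∫ s in Icc τ₀ t, h s)
          (𝓝[>] τ₀) (𝓝 0) ∧
        Tendsto (fun t => (∫ s in Icc t τ₀ \ J, g s) / ∫ s in Icc t τ₀, h s)
          (𝓝[<] τ₀) (𝓝 0) := by
  have hG : LocallyIntegrable ((Ioo a b \ J).indicator g) volume :=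
    ((integrable_indicator_iff (measurableSet_Ioo.diff hJ_meas)).2
      (hg_int.mono_set diff_subset)).locallyIntegrable
  have hH : LocallyIntegrable ((Ioo a b).indicator h) volume :=
    ((integrable_indicator_iff measurableSet_Ioo).2 hh_int).locallyIntegrable
  have ae1 := (IsUnifLocDoublingMeasure.vitaliFamily (volume : Measure ℝ) 1).ae_tendsto_average hG
  have ae2 := (IsUnifLocDoublingMeasure.vitaliFamily (volume : Measure ℝ) 1).ae_tendsto_average hH
  have ae3 := (ae_restrict_iff' measurableSet_Ioo).1 hh_pos
  obtain ⟨N, hN, hNm, hN0⟩ := exists_measurable_superset_of_null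
    (ae_iff.1 (ae1.and (ae2.and ae3)))
  refine ⟨J \ N, diff_subset, hJ_meas.diff hNm, ?_, ?_⟩
  · refine measure_mono_null ?_ hN0
    intro y hy
    by_contra hc
    exact hy.2 ⟨hy.1, hc⟩
  · rintro x ⟨hxJ, hxN⟩
    obtain ⟨p1, p2, p3⟩ := not_not.1 (fun hc => hxN (hN hc))
    have hx := hJ_sub hxJ
    rw [indicator_of_notMem (fun hc => hc.2 hxJ)] at p1
    rw [indicator_of_mem hx] at p2
    constructor
    · refine quotient_aux a b g h J hJ_meas x (fun _ => x) (fun t => t) _ _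
        (Real.tendsto_Icc_vitaliFamily_right x) ?_ p1 p2 (p3 hx)
      filter_upwards [Ioo_mem_nhdsGT hx.2] with t ht
      exact ⟨ht.1, fun y hy => ⟨hx.1.trans_le hy.1, hy.2.trans_lt ht.2⟩⟩
    · refine quotient_aux a b g h J hJ_meas x (fun t => t) (fun _ => x) _ _
        (Real.tendsto_Icc_vitaliFamily_left x) ?_ p1 p2 (p3 hx)
      filter_upwards [Ioo_mem_nhdsLT hx.1] with t ht
      exact ⟨ht.2, fun y hy => ⟨ht.1.trans_le hy.1, hy.2.trans_lt hx.2⟩⟩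
end

section
/- Let a, b ∈ ℝ with a < b, and let f, f_n : [a,b] → ℝ (n ∈ ℕ) be absolutely continuous functions on [a,b] such that f_n → f uniformly on [a,b], and suppose that for a measurable set A ⊆ [a,b] with m(A) > 0 one has lim_{n→∞} f_n'(t) = g(t) for a.e. t ∈ A. If there exists M ∈ L¹(a,b) such that |f'(t)| ≤ M(t) a.e. in [a,b] and |f_n'(t)| ≤ M(t) a.e. in [a,b] for every n ∈ ℕ, then f'(t) = g(t) for a.e. t ∈ A. -/
open Set MeasureTheory Filter Topology intervalIntegral

/-- Corollary 4.3 of López Pouso: if absolutely continuous functions `fₙ` (given with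
their a.e. derivatives `F' n` via the fundamental theorem of calculus) converge
uniformly to an absolutely continuous function `f` (with a.e. derivative `f'`), the
derivatives `F' n` converge a.e. on a set `A` of positive measure to `g`, and all
derivatives are dominated by `M ∈ L¹(a,b)`, then `f' = g` a.e. on `A`. -/
theorem ae_derivative_limit
    (a b : ℝ) (hab : a < b)
    (f f' gg M : ℝ → ℝ) (F F' : ℕ → ℝ → ℝ)
    -- `f` is absolutely continuous with a.e. derivative `f'`
    (hf'_int : IntegrableOn f' (Icc a b))
    (hf_ac : ∀ t ∈ Icc a b, f t = f a + ∫ s in a..t, f' s)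
    -- each `fₙ` is absolutely continuous with a.e. derivative `F' n`
    (hF'_int : ∀ n, IntegrableOn (F' n) (Icc a b))
    (hF_ac : ∀ n, ∀ t ∈ Icc a b, F n t = F n a + ∫ s in a..t, F' n s)
    -- uniform convergence `fₙ → f` on `[a,b]`
    (hunif : TendstoUniformlyOn F f atTop (Icc a b))
    -- `A ⊆ [a,b]` measurable of positive measure, `F' n → gg` a.e. on `A`
    (A : Set ℝ) (hA_meas : MeasurableSet A) (hA_sub : A ⊆ Icc a b)
    (hA_pos : 0 < volume A)
    (hconv : ∀ᵐ t ∂(volume.restrict A), Tendsto (fun n => F' n t) atTop (𝓝 (gg t)))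
    -- domination by `M ∈ L¹(a,b)`
    (hM_int : IntegrableOn M (Icc a b))
    (hdom : ∀ᵐ t ∂(volume.restrict (Icc a b)), |f' t| ≤ M t)
    (hdom' : ∀ n, ∀ᵐ t ∂(volume.restrict (Icc a b)), |F' n t| ≤ M t) :
    ∀ᵐ t ∂(volume.restrict A), f' t = gg t := by
  have hle : volume.restrict A ≤ volume.restrict (Icc a b) := Measure.restrict_mono hA_sub le_rfl
  have hleac := Measure.absolutelyContinuous_of_le hle
  -- base case: initial segments
  have hab' : a ≤ b := hab.le
  have hbase : ∀ t ∈ Icc a b,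
      Tendsto (fun n => ∫ x in a..t, (F' n x - f' x)) atTop (𝓝 0) := by
    intro t ht
    have h1 := hunif.tendsto_at ht
    have h2 := hunif.tendsto_at (left_mem_Icc.2 hab')
    have h3 := (h1.sub h2).sub_const (f t - f a)
    rw [sub_self] at h3
    refine h3.congr (fun n => ?_)
    have hsub : Icc a t ⊆ Icc a b := Icc_subset_Icc_right ht.2
    have i1 : IntervalIntegrable (F' n) volume a t :=
      (intervalIntegrable_iff_integrableOn_Icc_of_le ht.1).2 ((hF'_int n).mono_set hsub)
    have i2 : IntervalIntegrable f' volume a t :=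
      (intervalIntegrable_iff_integrableOn_Icc_of_le ht.1).2 (hf'_int.mono_set hsub)
    rw [intervalIntegral.integral_sub i1 i2]
    have := hF_ac n t ht
    have := hf_ac t ht
    linarith
  have hint : ∀ n, Integrable (fun x => F' n x - f' x) (volume.restrict (Icc a b)) :=
    fun n => (hF'_int n).sub hf'_int
  have huniv : Tendsto (fun n => ∫ x, (F' n x - f' x) ∂(volume.restrict (Icc a b)))
      atTop (𝓝 0) := by
    refine (hbase b (right_mem_Icc.2 hab')).congr (fun n => ?_)
    rw [intervalIntegral.integral_of_le hab', integral_Icc_eq_integral_Ioc]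
  have hdomn : ∀ n, ∀ᵐ x ∂(volume.restrict (Icc a b)), ‖F' n x - f' x‖ ≤ 2 * M x := by
    intro n
    filter_upwards [hdom, hdom' n] with x h1 h2
    rw [Real.norm_eq_abs]
    have := abs_sub (F' n x) (f' x)
    linarith
  have hM2 : Integrable (fun x => 2 * M x) (volume.restrict (Icc a b)) := hM_int.const_mul 2
  have key : ∀ E : Set ℝ, MeasurableSet E →
      Tendsto (fun n => ∫ x in E, (F' n x - f' x) ∂(volume.restrict (Icc a b)))
        atTop (𝓝 0) := by
    intro E hE
    induction E, hE using MeasurableSpace.induction_on_inter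
      (borel_eq_generateFrom_Iic ℝ ▸ BorelSpace.measurable_eq) isPiSystem_Iic with
    | empty => simp
    | basic u hu =>
      obtain ⟨t, rfl⟩ := hu
      by_cases hat : a ≤ t
      · have hm : min t b ∈ Icc a b := ⟨le_min hat hab', min_le_right _ _⟩
        refine (hbase _ hm).congr (fun n => ?_)
        rw [intervalIntegral.integral_of_le hm.1, ← integral_Icc_eq_integral_Ioc,
          Measure.restrict_restrict measurableSet_Iic]
        congr 2
        ext x
        simp only [mem_Icc, mem_inter_iff, mem_Iic, le_min_iff]
        tauto
      · have : Iic t ∩ Icc a b = ∅ := by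
          ext x
          simp only [mem_Icc, mem_inter_iff, mem_Iic, mem_empty_iff_false, iff_false]
          intro h
          linarith [h.1, h.2.1]
        rw [Measure.restrict_restrict measurableSet_Iic, this]
        simp
    | compl u hu ih =>
      have := huniv.sub ih
      rw [sub_self] at this
      refine this.congr (fun n => ?_)
      have := integral_add_compl hu (hint n)
      linarith
    | iUnion u hd hu ih =>
      have h0 : (0 : ℝ) = ∑' _ : ℕ, (0 : ℝ) := by simp
      rw [h0]
      have hsum : Summable (fun i => ∫ x in u i, 2 * M x ∂(volume.restrict (Icc a b))) :=
        (hasSum_integral_iUnion hu hd hM2.integrableOn).summable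
      refine (tendsto_tsum_of_dominated_convergence hsum ih
        (Eventually.of_forall fun n i => ?_)).congr (fun n => ?_)
      · exact norm_integral_le_of_norm_le hM2.integrableOn (ae_restrict_of_ae (hdomn n))
      · exact (integral_iUnion hu hd (hint n).integrableOn).symm
  -- limit on `A`
  have hmeas : ∀ n, AEStronglyMeasurable (F' n) (volume.restrict A) :=
    fun n => ((hF'_int n).mono_set hA_sub).aestronglyMeasurable
  have hMA : Integrable M (volume.restrict A) := hM_int.mono_set hA_sub
  have hbd : ∀ n, ∀ᵐ t ∂(volume.restrict A), ‖F' n t‖ ≤ M t :=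
    fun n => hleac (hdom' n)
  have hgg : Integrable gg (volume.restrict A) := by
    refine hMA.mono' (aestronglyMeasurable_of_tendsto_ae atTop hmeas hconv) ?_
    filter_upwards [hconv, ae_all_iff.2 hbd] with t h1 h2
    exact le_of_tendsto h1.norm (Eventually.of_forall h2)
  have hfA : Integrable f' (volume.restrict A) := hf'_int.mono_set hA_sub
  refine Integrable.ae_eq_of_forall_setIntegral_eq f' gg hfA hgg (fun s hs _ => ?_)
  have hk := key (s ∩ A) (hs.inter hA_meas)
  have hD : Tendsto (fun n => ∫ x in s, F' n x ∂(volume.restrict A)) atTop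
      (𝓝 (∫ x in s, gg x ∂(volume.restrict A))) :=
    tendsto_integral_of_dominated_convergence M (fun n => (hmeas n).restrict)
      hMA.integrableOn (fun n => ae_restrict_of_ae (hbd n)) (ae_restrict_of_ae hconv)
  have hD2 := hD.sub_const (∫ x in s, f' x ∂(volume.restrict A))
  have hEq : ∀ n, ∫ x in s ∩ A, (F' n x - f' x) ∂(volume.restrict (Icc a b)) =
      (∫ x in s, F' n x ∂(volume.restrict A)) - ∫ x in s, f' x ∂(volume.restrict A) := by
    intro n
    have hFA : Integrable (F' n) (volume.restrict A) := (hF'_int n).mono_set hA_sub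
    rw [← integral_sub hFA.integrableOn hfA.integrableOn,
      Measure.restrict_restrict (hs.inter hA_meas), Measure.restrict_restrict hs,
      inter_assoc, inter_eq_left.2 hA_sub]
  have := tendsto_nhds_unique (hk.congr hEq) hD2
  linarith
end

section
/- Let M ∈ L¹(0,1) with M ≥ 0 a.e., and let Q = { u ∈ C¹([0,1]) : |u'(t) − u'(s)| ≤ ∫ₛᵗ M(r) dr whenever 0 ≤ s ≤ t ≤ 1 }. Then Q is a closed subset of C([0,1]) with the maximum norm topology: if u_n ∈ Q for all n and u_n → u uniformly on [0,1], then u ∈ Q. -/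
open Set MeasureTheory Filter Topology

/-- `u` belongs to the set `Q = {u ∈ C¹([0,1]) : |u'(t) − u'(s)| ≤ ∫ₛᵗ M, 0 ≤ s ≤ t ≤ 1}`. -/
def memQ (M : ℝ → ℝ) (u : ℝ → ℝ) : Prop :=
  ∃ u' : ℝ → ℝ,
    (∀ t ∈ Icc (0:ℝ) 1, HasDerivWithinAt u (u' t) (Icc (0:ℝ) 1) t) ∧
    ContinuousOn u' (Icc (0:ℝ) 1) ∧
    ∀ s t : ℝ, 0 ≤ s → s ≤ t → t ≤ 1 → |u' t - u' s| ≤ ∫ r in Icc s t, M r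

theorem memQ_key (F u u' : ℝ → ℝ)
    (hd : ∀ t ∈ Icc (0:ℝ) 1, HasDerivWithinAt u (u' t) (Icc (0:ℝ) 1) t)
    (hF : ∀ s t : ℝ, 0 ≤ s → s ≤ t → t ≤ 1 → |u' t - u' s| ≤ F t - F s)
    (x y : ℝ) (hx : x ∈ Icc (0:ℝ) 1) (hy : y ∈ Icc (0:ℝ) 1) :
    |u y - u x - u' x * (y - x)| ≤ |F y - F x| * |y - x| := by
  have hsub : uIcc x y ⊆ Icc (0:ℝ) 1 := by
    rw [← uIcc_of_le (zero_le_one' ℝ)] at hx hy ⊢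
    exact uIcc_subset_uIcc hx hy
  have hder : ∀ z ∈ uIcc x y,
      HasDerivWithinAt (fun z => u z - u' x * z) (u' z - u' x) (uIcc x y) z := by
    intro z hz
    have h2 := ((hasDerivWithinAt_id z (uIcc x y)).const_mul (u' x))
    rw [mul_one] at h2
    exact ((hd z (hsub hz)).mono hsub).sub h2
  have hb : ∀ z ∈ uIcc x y, ‖u' z - u' x‖ ≤ |F y - F x| := by
    intro z hz
    rw [Real.norm_eq_abs]
    have hz1 := hsub hz
    rcases le_total x y with h | h
    · rw [uIcc_of_le h] at hz
      have h1 := hF x z hx.1 hz.1 hz1.2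
      have h2 := hF z y hz1.1 hz.2 hy.2
      have h3 := abs_nonneg (u' y - u' z)
      have h4 := le_abs_self (F y - F x)
      linarith
    · rw [uIcc_of_ge h] at hz
      have h1 := hF z x hz1.1 hz.2 hx.2
      have h2 := hF y z hy.1 hz.1 hz1.2
      have h3 := abs_nonneg (u' z - u' y)
      have h4 := neg_abs_le (F y - F x)
      rw [abs_sub_comm] at h1
      linarith
  have := (convex_uIcc x y).norm_image_sub_le_of_norm_hasDerivWithin_le hder hb
    left_mem_uIcc right_mem_uIcc
  simp only [Real.norm_eq_abs] at this
  convert this using 2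
  ring

/-- For `M ∈ L¹(0,1)`, `M ≥ 0` a.e., the set `Q` is closed in `C([0,1])` with the
maximum norm topology: a uniform limit of elements of `Q` belongs to `Q`. -/
theorem Q_is_closed
    (M : ℝ → ℝ) (hM_int : IntegrableOn M (Icc (0:ℝ) 1))
    (hM_nonneg : ∀ᵐ r ∂(volume.restrict (Icc (0:ℝ) 1)), 0 ≤ M r)
    (uN : ℕ → ℝ → ℝ) (hN : ∀ n, memQ M (uN n))
    (u : ℝ → ℝ) (hu : TendstoUniformlyOn uN u atTop (Icc (0:ℝ) 1)) :
    memQ M u := by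
  obtain ⟨F, hFc, hFM⟩ : ∃ F : ℝ → ℝ, ContinuousOn F (Icc (0:ℝ) 1) ∧
      ∀ s t : ℝ, 0 ≤ s → s ≤ t → t ≤ 1 → ∫ r in Icc s t, M r = F t - F s := by
    refine ⟨fun t => ∫ r in (0:ℝ)..t, M r, ?_, ?_⟩
    · have h := intervalIntegral.continuousOn_primitive_interval (μ := volume) (f := M)
        (a := 0) (b := 1) (by rwa [uIcc_of_le zero_le_one])
      rwa [uIcc_of_le zero_le_one] at h
    · intro s t hs hst ht
      have hi : ∀ t : ℝ, 0 ≤ t → t ≤ 1 → IntervalIntegrable M volume 0 t := by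
        intro t h0 h1
        rw [intervalIntegrable_iff_integrableOn_Icc_of_le h0]
        exact hM_int.mono_set (Icc_subset_Icc_right h1)
      rw [intervalIntegral.integral_interval_sub_left (hi t (hs.trans hst) ht)
        (hi s hs (hst.trans ht)), intervalIntegral.integral_of_le hst, integral_Icc_eq_integral_Ioc]
  choose d hd hdc hdM using hN
  have hdF : ∀ n, ∀ s t : ℝ, 0 ≤ s → s ≤ t → t ≤ 1 → |d n t - d n s| ≤ F t - F s := by
    intro n s t h1 h2 h3
    rw [← hFM s t h1 h2 h3]; exact hdM n s t h1 h2 h3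
  have key := fun n => memQ_key F (uN n) (d n) (hd n) (hdF n)
  have hpt : ∀ x ∈ Icc (0:ℝ) 1, Tendsto (fun n => uN n x) atTop (𝓝 (u x)) :=
    fun x hx => hu.tendsto_at hx
  -- pointwise convergence of the derivatives
  have hconv : ∀ x ∈ Icc (0:ℝ) 1, ∃ v, Tendsto (fun n => d n x) atTop (𝓝 v) := by
    intro x hx
    apply cauchySeq_tendsto_of_complete
    rw [Metric.cauchySeq_iff']
    intro ε hε
    obtain ⟨δ, hδ, hδF⟩ := Metric.continuousOn_iff.1 hFc x hx (ε / 4) (by positivity)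
    obtain ⟨y, hy, hyx, hyδ⟩ : ∃ y ∈ Icc (0:ℝ) 1, y ≠ x ∧ dist y x < δ := by
      have hm : 0 < min (δ / 2) (1 / 2) := by positivity
      have hm1 := min_le_left (δ / 2) (1 / 2)
      have hm2 := min_le_right (δ / 2) (1 / 2)
      rcases le_total x (1/2) with h | h
      · refine ⟨x + min (δ / 2) (1 / 2), ⟨by linarith [hx.1], by linarith⟩, by
          intro h'; linarith, ?_⟩
        rw [Real.dist_eq, abs_lt]; constructor <;> linarith
      · refine ⟨x - min (δ / 2) (1 / 2), ⟨by linarith, by linarith [hx.2]⟩, by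
          intro h'; linarith, ?_⟩
        rw [Real.dist_eq, abs_lt]; constructor <;> linarith
    have hF4 := hδF y hy hyδ
    rw [Real.dist_eq] at hF4
    have hq : ∀ n, |(uN n y - uN n x) / (y - x) - d n x| < ε / 4 := by
      intro n
      have h0 : y - x ≠ 0 := sub_ne_zero.2 hyx
      have h1 : (uN n y - uN n x) / (y - x) - d n x
          = (uN n y - uN n x - d n x * (y - x)) / (y - x) := by field_simp
      rw [h1, abs_div, div_lt_iff₀ (abs_pos.2 h0)]
      exact (key n x y hx hy).trans_lt (mul_lt_mul_of_pos_right hF4 (abs_pos.2 h0))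
    have hD : CauchySeq (fun n => (uN n y - uN n x) / (y - x)) :=
      (((hpt y hy).sub (hpt x hx)).div_const (y - x)).cauchySeq
    obtain ⟨N, hNN⟩ := Metric.cauchySeq_iff'.1 hD (ε / 4) (by positivity)
    refine ⟨N, fun n hn => ?_⟩
    have h1 := hNN n hn
    have h2 := hq n
    have h3 := hq N
    rw [Real.dist_eq, abs_lt] at h1 ⊢
    rw [abs_lt] at h2 h3
    constructor <;> linarith [h1.1, h1.2, h2.1, h2.2, h3.1, h3.2]
  choose! v hv using hconv
  have hvF : ∀ s t : ℝ, 0 ≤ s → s ≤ t → t ≤ 1 → |v t - v s| ≤ F t - F s := by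
    intro s t h1 h2 h3
    exact le_of_tendsto ((hv t ⟨h1.trans h2, h3⟩).sub (hv s ⟨h1, h2.trans h3⟩)).abs
      (Eventually.of_forall fun n => hdF n s t h1 h2 h3)
  have hvF' : ∀ s ∈ Icc (0:ℝ) 1, ∀ t ∈ Icc (0:ℝ) 1, |v t - v s| ≤ |F t - F s| := by
    intro s hs t ht
    rcases le_total s t with h | h
    · exact (hvF s t hs.1 h ht.2).trans (le_abs_self _)
    · rw [abs_sub_comm, abs_sub_comm (F t)]
      exact (hvF t s ht.1 h hs.2).trans (le_abs_self _)
  have hkey : ∀ x ∈ Icc (0:ℝ) 1, ∀ y ∈ Icc (0:ℝ) 1,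
      |u y - u x - v x * (y - x)| ≤ |F y - F x| * |y - x| := by
    intro x hx y hy
    exact le_of_tendsto (((hpt y hy).sub (hpt x hx)).sub ((hv x hx).mul_const (y - x))).abs
      (Eventually.of_forall fun n => key n x y hx hy)
  refine ⟨v, ?_, ?_, ?_⟩
  · intro x hx
    rw [hasDerivWithinAt_iff_isLittleO, Asymptotics.isLittleO_iff]
    intro c hc
    obtain ⟨δ, hδ, hδF⟩ := Metric.continuousOn_iff.1 hFc x hx c hc
    filter_upwards [self_mem_nhdsWithin, mem_nhdsWithin_of_mem_nhds (Metric.ball_mem_nhds x hδ)]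
      with y hy hyb
    have h1 := hδF y hy hyb
    rw [Real.dist_eq] at h1
    have h2 := hkey x hx y hy
    simp only [Real.norm_eq_abs, smul_eq_mul]
    rw [mul_comm (y - x)]
    exact h2.trans (mul_le_mul_of_nonneg_right h1.le (abs_nonneg _))
  · rw [Metric.continuousOn_iff]
    intro x hx ε hε
    obtain ⟨δ, hδ, hδF⟩ := Metric.continuousOn_iff.1 hFc x hx ε hε
    refine ⟨δ, hδ, fun y hy hyx => ?_⟩
    have h1 := hδF y hy hyx
    rw [Real.dist_eq] at h1 ⊢
    exact (hvF' x hx y hy).trans_lt h1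
  · intro s t h1 h2 h3
    rw [hFM s t h1 h2 h3]
    exact hvF s t h1 h2 h3
end

section
/- Let M ∈ L¹(0,1) with M ≥ 0 a.e., and let Q = { u ∈ C¹([0,1]) : |u'(t) − u'(s)| ≤ ∫ₛᵗ M(r) dr whenever 0 ≤ s ≤ t ≤ 1 }. If u_n ∈ Q for all n ∈ ℕ and u_n → u uniformly on [0,1], then there exists a subsequence (u_{n_k}) which converges to u in the C¹ norm; in particular u ∈ C¹([0,1]) and u_{n_k}' → u' uniformly on [0,1]. -/
open Set MeasureTheory Filter Topology

/-- For `M ∈ L¹(0,1)`, `M ≥ 0` a.e., if `uₙ` belong to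
`Q = {u ∈ C¹([0,1]) : |u'(t) − u'(s)| ≤ ∫ₛᵗ M, 0 ≤ s ≤ t ≤ 1}` (with derivatives
`dN n`) and `uₙ → u` uniformly on `[0,1]`, then some subsequence of `uₙ` converges to
`u` in the `C¹` norm: `u ∈ C¹([0,1])` and the corresponding derivatives converge
uniformly to `u'`. -/
theorem Q_subsequence_C1_convergence
    (M : ℝ → ℝ) (hM_int : IntegrableOn M (Icc (0:ℝ) 1))
    (hM_nonneg : ∀ᵐ r ∂(volume.restrict (Icc (0:ℝ) 1)), 0 ≤ M r)
    (uN : ℕ → ℝ → ℝ) (dN : ℕ → ℝ → ℝ)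
    (hderiv : ∀ n, ∀ t ∈ Icc (0:ℝ) 1, HasDerivWithinAt (uN n) (dN n t) (Icc (0:ℝ) 1) t)
    (hcont : ∀ n, ContinuousOn (dN n) (Icc (0:ℝ) 1))
    (hQ : ∀ n, ∀ s t : ℝ, 0 ≤ s → s ≤ t → t ≤ 1 → |dN n t - dN n s| ≤ ∫ r in Icc s t, M r)
    (u : ℝ → ℝ) (hu : TendstoUniformlyOn uN u atTop (Icc (0:ℝ) 1)) :
    ∃ φ : ℕ → ℕ, StrictMono φ ∧ ∃ u' : ℝ → ℝ,
      (∀ t ∈ Icc (0:ℝ) 1, HasDerivWithinAt u (u' t) (Icc (0:ℝ) 1) t) ∧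
      ContinuousOn u' (Icc (0:ℝ) 1) ∧
      TendstoUniformlyOn (fun k => uN (φ k)) u atTop (Icc (0:ℝ) 1) ∧
      TendstoUniformlyOn (fun k => dN (φ k)) u' atTop (Icc (0:ℝ) 1) := by
  -- equicontinuity of the derivatives
  have hE : ∀ ε > 0, ∃ δ > 0, ∀ n, ∀ s ∈ Icc (0:ℝ) 1, ∀ t ∈ Icc (0:ℝ) 1, |s - t| < δ →
      |dN n s - dN n t| ≤ ε := by
    have hF : ContinuousOn (fun x => ∫ r in Ioc 0 x, M r) (Icc (0:ℝ) 1) :=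
      intervalIntegral.continuousOn_primitive hM_int
    have hU := isCompact_Icc.uniformContinuousOn_of_continuous hF
    rw [Metric.uniformContinuousOn_iff] at hU
    intro ε hε
    obtain ⟨δ, hδ, H⟩ := hU ε hε
    refine ⟨δ, hδ, ?_⟩
    have key : ∀ n, ∀ s ∈ Icc (0:ℝ) 1, ∀ t ∈ Icc (0:ℝ) 1, |s - t| < δ → s ≤ t →
        |dN n t - dN n s| ≤ ε := by
      intro n s hs t ht hst hle
      have h1 := hQ n s t hs.1 hle ht.2
      have h2 := H s hs t ht (by rwa [Real.dist_eq])
      have h3 : (∫ r in Ioc 0 t, M r) = (∫ r in Ioc 0 s, M r) + ∫ r in Ioc s t, M r := by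
        rw [← Ioc_union_Ioc_eq_Ioc hs.1 hle]
        apply setIntegral_union (Ioc_disjoint_Ioc_of_le le_rfl) measurableSet_Ioc
        · exact hM_int.mono_set (fun x hx => ⟨hx.1.le, hx.2.trans hs.2⟩)
        · exact hM_int.mono_set (fun x hx => ⟨hs.1.trans hx.1.le, hx.2.trans ht.2⟩)
      rw [integral_Icc_eq_integral_Ioc] at h1
      rw [Real.dist_eq, abs_lt] at h2
      linarith [h2.1]
    intro n s hs t ht hst
    rcases le_total s t with h | h
    · rw [abs_sub_comm]; exact key n s hs t ht hst h
    · exact key n t ht s hs (by rwa [abs_sub_comm]) h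
  have hK : ∀ ε > 0, ∃ δ > 0, ∀ n, ∀ s ∈ Icc (0:ℝ) 1, ∀ t ∈ Icc (0:ℝ) 1, |s - t| < δ →
      |uN n s - uN n t - (s - t) * dN n t| ≤ ε * |s - t| := by
    intro ε hε
    obtain ⟨δ, hδ, H⟩ := hE ε hε
    refine ⟨δ, hδ, fun n s hs t ht hst => ?_⟩
    have hc : Convex ℝ (Icc (0:ℝ) 1 ∩ Metric.ball t δ) :=
      (convex_Icc 0 1).inter (convex_ball t δ)
    have := hc.norm_image_sub_le_of_norm_hasDerivWithin_le
      (f := fun x => uN n x - x * dN n t) (f' := fun x => dN n x - 1 * dN n t) (C := ε)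
      (x := t) (y := s)
      (fun x hx => ((hderiv n x hx.1).mono inter_subset_left).sub
        ((hasDerivWithinAt_id x _).mul_const _))
      (fun x hx => by
        rw [Real.norm_eq_abs, one_mul]
        exact H n x hx.1 t ht (by simpa [Real.dist_eq] using hx.2))
      ⟨ht, Metric.mem_ball_self hδ⟩ ⟨hs, by simpa [Real.dist_eq] using hst⟩
    simp only [Real.norm_eq_abs] at this
    convert this using 2
    ring
  have hC : UniformCauchySeqOn dN atTop (Icc (0:ℝ) 1) := by
    rw [Metric.uniformCauchySeqOn_iff]
    intro ε hε
    obtain ⟨δ, hδ, H⟩ := hK (ε / 4) (by positivity)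
    set h : ℝ := min (δ / 2) (1 / 2) with hh
    have hpos : 0 < h := by positivity
    have hlt : h < δ := (min_le_left _ _).trans_lt (by linarith)
    have hhalf : h ≤ 1 / 2 := min_le_right _ _
    obtain ⟨N, hN⟩ := (Metric.uniformCauchySeqOn_iff.1 hu.uniformCauchySeqOn)
      (ε * h / 8) (by positivity)
    refine ⟨N, fun m hm n hn t ht => ?_⟩
    have hs : ∃ s ∈ Icc (0:ℝ) 1, |s - t| = h := by
      rcases le_total t (1 / 2) with h' | h'
      · exact ⟨t + h, ⟨by linarith [ht.1], by linarith⟩, by simp [abs_of_pos hpos]⟩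
      · exact ⟨t - h, ⟨by linarith, by linarith [ht.2]⟩, by simp [abs_of_pos hpos]⟩
    obtain ⟨s, hs, hst⟩ := hs
    have a1 := H m s hs t ht (by rwa [hst])
    have a2 := H n s hs t ht (by rwa [hst])
    have a3 := hN m hm n hn s hs
    have a4 := hN m hm n hn t ht
    rw [Real.dist_eq] at a3 a4 ⊢
    rw [hst] at a1 a2
    have e : h * |dN m t - dN n t| = |(s - t) * (dN m t - dN n t)| := by rw [abs_mul, hst]
    have : h * |dN m t - dN n t| < h * ε := by
      rw [e]
      rw [abs_le] at a1 a2
      rw [abs_lt] at a3 a4 ⊢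
      have := mul_pos hε hpos
      constructor <;> linarith [a1.1, a1.2, a2.1, a2.2, a3.1, a3.2, a4.1, a4.2]
    exact lt_of_mul_lt_mul_left this hpos.le
  have hlim : ∀ t, ∃ l, t ∈ Icc (0:ℝ) 1 → Tendsto (fun n => dN n t) atTop (𝓝 l) := by
    intro t
    by_cases ht : t ∈ Icc (0:ℝ) 1
    · obtain ⟨l, hl⟩ := cauchySeq_tendsto_of_complete (hC.cauchySeq ht)
      exact ⟨l, fun _ => hl⟩
    · exact ⟨0, fun h => absurd h ht⟩
  choose u' hu' using hlim
  have hT : TendstoUniformlyOn dN u' atTop (Icc (0:ℝ) 1) :=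
    hC.tendstoUniformlyOn_of_tendsto (fun t ht => hu' t ht)
  refine ⟨id, strictMono_id, u', ?_, hT.continuousOn (Frequently.of_forall hcont), hu, hT⟩
  intro t ht
  rw [hasDerivWithinAt_iff_isLittleO, Asymptotics.isLittleO_iff]
  intro ε hε
  obtain ⟨δ, hδ, H⟩ := hK ε hε
  filter_upwards [self_mem_nhdsWithin, mem_nhdsWithin_of_mem_nhds (Metric.ball_mem_nhds t hδ)]
    with s hs hst
  rw [Real.norm_eq_abs, Real.norm_eq_abs, smul_eq_mul]
  have hlim := (((hu.tendsto_at hs).sub (hu.tendsto_at ht)).sub ((hu' t ht).const_mul (s - t))).abs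
  exact le_of_tendsto hlim (Eventually.of_forall fun n =>
    H n s hs t ht (by simpa [Real.dist_eq] using hst))
end

section
/- Let α, β, γ, δ ≥ 0 with Γ := γβ + αγ + αδ > 0, and let G(t,s) = (1/Γ)·(γ + δ − γt)(β + αs) if 0 ≤ s ≤ t ≤ 1 and G(t,s) = (1/Γ)·(β + αt)(γ + δ − γs) if 0 ≤ t < s ≤ 1. Then G is nonnegative, G(t,s) ≤ G(s,s) for all t, s ∈ [0,1], and if a, b ∈ [0,1] satisfy −β/α < a < b < 1 + δ/γ (with β/α = ∞ if α = 0 and δ/γ = ∞ if γ = 0) and c = min{ (γ + δ − γb)/(γ + δ), (β + αa)/(α + β) }, then c·G(s,s) ≤ G(t,s) for all t ∈ [a,b] and s ∈ [0,1]. -/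
open Set

/-- The Green's function of the Sturm–Liouville problem `u'' + h = 0`,
`αu(0) − βu'(0) = 0`, `γu(1) + δu'(1) = 0`. -/
noncomputable def GreenG (α β γ δ : ℝ) (t s : ℝ) : ℝ :=
  (1 / (γ * β + α * γ + α * δ)) *
    (if s ≤ t then (γ + δ - γ * t) * (β + α * s) else (β + α * t) * (γ + δ - γ * s))

/-- The Green's function is nonnegative, satisfies `G(t,s) ≤ G(s,s)`, and with the
choices `−β/α < a < b < 1 + δ/γ` and
`c = min{(γ+δ−γb)/(γ+δ), (β+αa)/(α+β)}` one has `c·G(s,s) ≤ G(t,s)` for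
`t ∈ [a,b]`, `s ∈ [0,1]`. -/
theorem GreenG_bounds
    (α β γ δ : ℝ) (hα : 0 ≤ α) (hβ : 0 ≤ β) (hγ : 0 ≤ γ) (hδ : 0 ≤ δ)
    (hΓ : 0 < γ * β + α * γ + α * δ)
    (a b : ℝ) (ha0 : 0 ≤ a) (hab : a < b) (hb1 : b ≤ 1)
    (haα : α ≠ 0 → -(β / α) < a) (hbγ : γ ≠ 0 → b < 1 + δ / γ)
    (c : ℝ) (hc : c = min ((γ + δ - γ * b) / (γ + δ)) ((β + α * a) / (α + β))) :
    (∀ t ∈ Icc (0:ℝ) 1, ∀ s ∈ Icc (0:ℝ) 1, 0 ≤ GreenG α β γ δ t s) ∧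
    (∀ t ∈ Icc (0:ℝ) 1, ∀ s ∈ Icc (0:ℝ) 1, GreenG α β γ δ t s ≤ GreenG α β γ δ s s) ∧
    (∀ t ∈ Icc a b, ∀ s ∈ Icc (0:ℝ) 1,
      c * GreenG α β γ δ s s ≤ GreenG α β γ δ t s) := by
  have hgd : 0 < γ + δ := by
    by_contra h
    have h1 : γ = 0 := by linarith
    have h2 : δ = 0 := by linarith
    simp [h1, h2] at hΓ
  have hab' : 0 < α + β := by
    by_contra h
    have h1 : α = 0 := by linarith
    have h2 : β = 0 := by linarith
    simp [h1, h2] at hΓ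
  have hI : 0 ≤ 1 / (γ * β + α * γ + α * δ) := by positivity
  have hP : ∀ x : ℝ, x ≤ 1 → 0 ≤ γ + δ - γ * x := by
    intro x hx
    nlinarith [mul_nonneg hγ (sub_nonneg.2 hx)]
  have hQ : ∀ x : ℝ, 0 ≤ x → 0 ≤ β + α * x := by
    intro x hx
    positivity
  have hPm : ∀ x y : ℝ, x ≤ y → γ + δ - γ * y ≤ γ + δ - γ * x := by
    intro x y h
    linarith [mul_le_mul_of_nonneg_left h hγ]
  have hQm : ∀ x y : ℝ, x ≤ y → β + α * x ≤ β + α * y := by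
    intro x y h
    linarith [mul_le_mul_of_nonneg_left h hα]
  have hc0 : 0 ≤ c := by
    rw [hc]
    exact le_min (div_nonneg (hP b hb1) hgd.le) (div_nonneg (hQ a ha0) hab'.le)
  have hc1 : c * (γ + δ) ≤ γ + δ - γ * b := by
    rw [← le_div_iff₀ hgd, hc]
    exact min_le_left _ _
  have hc2 : c * (α + β) ≤ β + α * a := by
    rw [← le_div_iff₀ hab', hc]
    exact min_le_right _ _
  refine ⟨?_, ?_, ?_⟩
  · rintro t ⟨ht0, ht1⟩ s ⟨hs0, hs1⟩
    unfold GreenG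
    refine mul_nonneg hI ?_
    split_ifs
    · exact mul_nonneg (hP t ht1) (hQ s hs0)
    · exact mul_nonneg (hQ t ht0) (hP s hs1)
  · rintro t ⟨ht0, ht1⟩ s ⟨hs0, hs1⟩
    unfold GreenG
    refine mul_le_mul_of_nonneg_left ?_ hI
    rw [if_pos (le_refl s)]
    split_ifs with h
    · exact mul_le_mul_of_nonneg_right (hPm s t h) (hQ s hs0)
    · rw [mul_comm]
      exact mul_le_mul_of_nonneg_left (hQm t s (not_le.1 h).le) (hP s hs1)
  · rintro t ⟨hta, htb⟩ s ⟨hs0, hs1⟩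
    unfold GreenG
    rw [mul_left_comm]
    refine mul_le_mul_of_nonneg_left ?_ hI
    rw [if_pos (le_refl s)]
    split_ifs with h
    · rw [← mul_assoc]
      refine mul_le_mul_of_nonneg_right ?_ (hQ s hs0)
      have h1 := mul_le_mul_of_nonneg_left (hPm 0 s hs0) hc0
      have h2 := hPm t b htb
      simp only [mul_zero, sub_zero] at h1
      linarith
    · rw [mul_left_comm, mul_comm]
      refine mul_le_mul_of_nonneg_right ?_ (hP s hs1)
      have h1 := mul_le_mul_of_nonneg_left (hQm s 1 hs1) hc0
      have h2 := hQm a t hta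
      simp only [mul_one] at h1
      linarith
end

section
/- Assume (H1) for f, g ∈ L¹(0,1) with g ≥ 0 a.e., and k : [0,1]² → [0,∞) continuous, and let Tu(t) = ∫₀¹ k(t,s)g(s)f(s,u(s)) ds. Let K₂ be a bounded subset of the cone K on which g(t)f(t,u) ≤ M(t) a.e. for some M ∈ L¹(0,1) and all u ∈ K₂ with values in the relevant range. If u ∈ K₂ is such that m({t ∈ I_n : u(t) = γ_n(t)}) = 0 for every n ∈ ℕ, where (γ_n : I_n → [0,∞)) are curves such that for a.e. t ∈ [0,1] the map v ↦ f(t,v) is continuous on [0,∞) \ ⋃_{n : t ∈ I_n}{γ_n(t)}, then T is continuous at u: for every sequence u_k → u uniformly with u_k ∈ K₂, one has Tu_k → Tu uniformly on [0,1]. -/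
open Set Metric MeasureTheory Filter Topology

/-- If `u ∈ K₂` meets each discontinuity curve `γₙ` only on a null set, then the
Hammerstein operator is continuous at `u`: `u_j → u` uniformly with `u_j ∈ K₂`
implies `Tu_j → Tu` uniformly on `[0,1]`. -/
theorem hammerstein_continuous_at
    (a b c : ℝ) (ha0 : 0 ≤ a) (hab : a ≤ b) (hb1 : b ≤ 1) (hc0 : 0 < c) (hc1 : c ≤ 1)
    (f : ℝ → ℝ → ℝ) (g : ℝ → ℝ) (k : ℝ → ℝ → ℝ)
    -- (H1)
    (hf_nonneg : ∀ t ∈ Icc (0:ℝ) 1, ∀ v, 0 ≤ v → 0 ≤ f t v)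
    (hf_meas : ∀ v : ℝ → ℝ, Continuous v → Measurable fun t => f t (v t))
    (hf_bdd : ∀ r > (0:ℝ), ∃ R > (0:ℝ),
      ∀ᵐ t ∂(volume.restrict (Icc (0:ℝ) 1)), ∀ v ∈ Icc (0:ℝ) r, f t v ≤ R)
    -- `g ∈ L¹(0,1)`, `g ≥ 0` a.e.
    (hg_int : IntegrableOn g (Icc (0:ℝ) 1))
    (hg_nonneg : ∀ᵐ s ∂(volume.restrict (Icc (0:ℝ) 1)), 0 ≤ g s)
    -- kernel
    (hk_cont : ContinuousOn (fun p : ℝ × ℝ => k p.1 p.2) (Icc 0 1 ×ˢ Icc 0 1))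
    (hk_nonneg : ∀ t ∈ Icc (0:ℝ) 1, ∀ s ∈ Icc (0:ℝ) 1, 0 ≤ k t s)
    -- `K₂` a bounded subset of the cone with integrable domination
    (K₂ : Set C(Icc (0:ℝ) 1, ℝ)) (hK₂ : K₂ ⊆ coneK a b c)
    (hK₂_bdd : Bornology.IsBounded K₂)
    (M : ℝ → ℝ) (hM_int : IntegrableOn M (Icc (0:ℝ) 1))
    (hdom : ∀ v ∈ K₂, ∀ᵐ t ∂(volume.restrict (Icc (0:ℝ) 1)),
      g t * f t (uext v t) ≤ M t)
    -- discontinuity curves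
    (aN bN : ℕ → ℝ) (γN : ℕ → ℝ → ℝ)
    (hsub : ∀ n, Icc (aN n) (bN n) ⊆ Icc (0:ℝ) 1)
    (hcont_off : ∀ᵐ t ∂(volume.restrict (Icc (0:ℝ) 1)), ∀ v : ℝ, 0 ≤ v →
      (∀ n, t ∈ Icc (aN n) (bN n) → v ≠ γN n t) →
      ContinuousWithinAt (fun y => f t y) (Ici 0) v)
    -- `u` meets each curve on a null set
    (u : C(Icc (0:ℝ) 1, ℝ)) (hu : u ∈ K₂)
    (hnull : ∀ n, volume {t ∈ Icc (aN n) (bN n) | uext u t = γN n t} = 0) :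
    ∀ uJ : ℕ → C(Icc (0:ℝ) 1, ℝ), (∀ j, uJ j ∈ K₂) →
      Tendsto uJ atTop (𝓝 u) →
      TendstoUniformlyOn (fun j t => hamVal k g f (uJ j) t)
        (fun t => hamVal k g f u t) atTop (Icc (0:ℝ) 1) := by
  intro uJ hJ hlim
  have hext_cont : ∀ v : C(Icc (0:ℝ) 1, ℝ), Continuous (uext v) := fun v =>
    v.continuous.Icc_extend'
  have hext_nonneg : ∀ v ∈ K₂, ∀ s, 0 ≤ uext v s := fun v hv s => (hK₂ hv).1 _
  have hmem : ∀ᵐ s ∂(volume.restrict (Icc (0:ℝ) 1)), s ∈ Icc (0:ℝ) 1 :=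
    ae_restrict_mem measurableSet_Icc
  have hmeas : ∀ v : C(Icc (0:ℝ) 1, ℝ), AEStronglyMeasurable (fun s => g s * f s (uext v s))
      (volume.restrict (Icc (0:ℝ) 1)) := fun v =>
    hg_int.aestronglyMeasurable.mul (hf_meas _ (hext_cont v)).aestronglyMeasurable
  have hnn : ∀ v ∈ K₂, ∀ᵐ s ∂(volume.restrict (Icc (0:ℝ) 1)), 0 ≤ g s * f s (uext v s) := by
    intro v hv
    filter_upwards [hg_nonneg, hmem] with s h1 h2
    exact mul_nonneg h1 (hf_nonneg s h2 _ (hext_nonneg v hv s))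
  have hint : ∀ v ∈ K₂, Integrable (fun s => g s * f s (uext v s))
      (volume.restrict (Icc (0:ℝ) 1)) := by
    intro v hv
    refine Integrable.mono' hM_int (hmeas v) ?_
    filter_upwards [hnn v hv, hdom v hv] with s h1 h2
    rwa [Real.norm_of_nonneg h1]
  obtain ⟨C, hC⟩ := (isCompact_Icc.prod isCompact_Icc).exists_bound_of_continuousOn hk_cont
  have hkC : ∀ t ∈ Icc (0:ℝ) 1, ∀ s ∈ Icc (0:ℝ) 1, ‖k t s‖ ≤ C := fun t ht s hs =>
    hC (t, s) ⟨ht, hs⟩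
  have hC0 : 0 ≤ C := (norm_nonneg _).trans
    (hkC 0 (left_mem_Icc.2 zero_le_one) 0 (left_mem_Icc.2 zero_le_one))
  have hkint : ∀ v ∈ K₂, ∀ t ∈ Icc (0:ℝ) 1,
      Integrable (fun s => k t s * (g s * f s (uext v s))) (volume.restrict (Icc (0:ℝ) 1)) := by
    intro v hv t ht
    refine (hint v hv).bdd_mul (c := C) ?_ ?_
    · have : ContinuousOn (fun s => k t s) (Icc (0:ℝ) 1) :=
        hk_cont.comp (f := fun s : ℝ => (t, s)) (by fun_prop) (fun s hs => ⟨ht, hs⟩)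
      exact this.aestronglyMeasurable measurableSet_Icc
    · filter_upwards [hmem] with s hs using hkC t ht s hs
  have hnull' : ∀ᵐ s ∂(volume.restrict (Icc (0:ℝ) 1)), ∀ n, s ∈ Icc (aN n) (bN n) →
      uext u s ≠ γN n s := by
    refine ae_restrict_of_ae (ae_all_iff.2 fun n => ?_)
    have := measure_eq_zero_iff_ae_notMem.1 (hnull n)
    filter_upwards [this] with s hs h1 h2
    exact hs ⟨h1, h2⟩
  have hext_lim : ∀ s, Tendsto (fun j => uext (uJ j) s) atTop (𝓝 (uext u s)) := fun s =>
    ((continuous_eval_const (F := C(Icc (0:ℝ) 1, ℝ)) (projIcc (0:ℝ) 1 zero_le_one s)).tendsto u).comp hlim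
  have hD : Tendsto (fun j => ∫ s in Icc (0:ℝ) 1,
      ‖g s * f s (uext (uJ j) s) - g s * f s (uext u s)‖) atTop (𝓝 0) := by
    have h0 : ∫ s in Icc (0:ℝ) 1, (0:ℝ) = 0 := by simp
    refine Tendsto.mono_right ?_ (le_of_eq (congrArg 𝓝 h0))
    refine tendsto_integral_of_dominated_convergence M
      (fun j => ((hmeas (uJ j)).sub (hmeas u)).norm) hM_int (fun j => ?_) ?_
    · filter_upwards [hnn _ (hJ j), hdom _ (hJ j), hnn u hu, hdom u hu] with s h1 h2 h3 h4
      rw [norm_norm, Real.norm_eq_abs, abs_le]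
      constructor <;> linarith
    · filter_upwards [hnull', hcont_off] with s h1 h2
      have hc := h2 (uext u s) (hext_nonneg u hu s) h1
      have h3 : Tendsto (fun j => f s (uext (uJ j) s)) atTop (𝓝 (f s (uext u s))) :=
        hc.tendsto.comp (tendsto_nhdsWithin_iff.2
          ⟨hext_lim s, Eventually.of_forall fun j => hext_nonneg _ (hJ j) s⟩)
      have h4 := ((h3.const_mul (g s)).sub_const (g s * f s (uext u s))).norm
      simpa using h4
  rw [Metric.tendstoUniformlyOn_iff]
  intro ε hε
  have hCD := hD.const_mul C
  rw [mul_zero] at hCD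
  filter_upwards [hCD.eventually (gt_mem_nhds hε)] with j hj t ht
  refine lt_of_le_of_lt ?_ hj
  rw [dist_comm, dist_eq_norm]
  simp only [hamVal, mul_assoc]
  rw [← integral_sub (hkint _ (hJ j) t ht) (hkint u hu t ht), ← integral_const_mul]
  refine norm_integral_le_of_norm_le ((((hint _ (hJ j)).sub (hint u hu)).norm).const_mul C) ?_
  filter_upwards [hmem] with s hs
  rw [← mul_sub, norm_mul]
  exact mul_le_mul_of_nonneg_right (hkC t ht s hs) (norm_nonneg _)
end
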